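/- arXiv:1912.10759 — 4 statements merged into one kernel-verified Lean document; each statement's English description precedes it below -/
import Mathlib

section
/- Let α > 0 and T > 0, and let (X,d,μ) be a metric measure space, with μ a nonnegative σ-finite Radon measure whose support is X, satisfying the local doubling condition: there exist r₀ > 0 and C_D > 0 such that μ(B_{2r}(x)) ≤ C_D μ(B_r(x)) for every x ∈ X and every 0 < r < r₀. Assume that the Gaussian Chapman–Kolmogorov identity ∫_X P_α(x,z,t) P_α(z,y,s) dμ(z) = P_α(x,y,t+s) holds for all x,y ∈ X and all s,t ∈ (0,T). Then this identity holds for all s,t > 0, and moreover ∫_X P_α(x,z,t) dμ(z) = 1 for every x ∈ X and every t > 0. -/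
/-!
Write `P t x y` for the Gaussian kernel.

*One short time.* Setting `x = y` and both times equal to `2t < T` in the hypothesis shows that
`z ↦ P t x z` is `μ`-integrable for `t < T / 2`. For such `t`, in the variable `w = 1 / s`, the
integral `∫ P t x z * exp (-w * dist z y ^ 2 / 4) dμ(z)` is the Laplace transform of a finite
measure, hence real analytic on `w > 0`, and so is the expected closed form. They agree for
`w > 1 / T`, so they agree for all `w > 0` (`integral_mul_exp_neg_eq_of_lt`). This gives the
identity for `t < T / 2` and every `s > 0` (`chapmanKolmogorov_of_lt`).

*All times.* A σ-finite measure charging every ball forces `X` to be second countable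
(`secondCountable_of_ball_pos`), so Tonelli's theorem applies to the kernel. Splitting `t` into `n`
equal steps shorter than `T / 2`, associativity of kernel composition gives the identity for every
`t` (`lintegral_chapmanKolmogorov_nsmul`).

*Total mass.* Multiplying the identity for `x = y` by `(4 π s) ^ (α / 2)` and letting `s → ∞`,
monotone convergence gives `∫ P t x z dμ(z) = 1`.
-/

open MeasureTheory Metric Real Set Filter
open scoped ENNReal NNReal Topology

/-- The Gaussian kernel `(4πt)^(-α/2) exp(-d(x,y)²/(4t))`. -/
noncomputable def gaussKernel {X : Type*} [MetricSpace X] (α t : ℝ) (x y : X) : ℝ :=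
  (4 * π * t) ^ (-(α / 2)) * Real.exp (-(dist x y) ^ 2 / (4 * t))

section Kernel

variable {X : Type*} [MetricSpace X] {α s t : ℝ}

lemma gaussKernel_pos (ht : 0 < t) (x y : X) : 0 < gaussKernel α t x y := by
  unfold gaussKernel
  have : 0 < 4 * π * t := by positivity
  positivity

lemma continuous_gaussKernel : Continuous (fun p : X × X => gaussKernel α t p.1 p.2) := by
  unfold gaussKernel
  fun_prop

lemma continuous_gaussKernel_right (x : X) : Continuous (gaussKernel α t x) := by
  unfold gaussKernel
  fun_prop

lemma continuous_gaussKernel_left (y : X) : Continuous (fun x => gaussKernel α t x y) := by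
  unfold gaussKernel
  fun_prop

variable [MeasurableSpace X] [BorelSpace X] {μ : Measure X}

/-- The real Chapman–Kolmogorov identity is equivalent to its `ℝ≥0∞`-valued form; integrability is
automatic because the right-hand side is nonzero. -/
lemma integral_gaussKernel_iff (hs : 0 < s) (ht : 0 < t) (x y : X) :
    ∫ z, gaussKernel α t x z * gaussKernel α s z y ∂μ = gaussKernel α (t + s) x y ↔
      ∫⁻ z, ENNReal.ofReal (gaussKernel α t x z) * ENNReal.ofReal (gaussKernel α s z y) ∂μ =
        ENNReal.ofReal (gaussKernel α (t + s) x y) := by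
  have hpos := gaussKernel_pos (α := α) (add_pos ht hs) x y
  have hnn : ∀ z, 0 ≤ gaussKernel α t x z * gaussKernel α s z y := fun z =>
    (mul_pos (gaussKernel_pos ht x z) (gaussKernel_pos hs z y)).le
  simp_rw [← ENNReal.ofReal_mul (gaussKernel_pos (α := α) ht x _).le]
  constructor
  · intro h
    have hint : Integrable (fun z => gaussKernel α t x z * gaussKernel α s z y) μ := by
      by_contra hn
      rw [integral_undef hn] at h
      exact hpos.ne h
    rw [← ofReal_integral_eq_lintegral_ofReal hint (Eventually.of_forall hnn), h]
  · intro h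
    rw [integral_eq_lintegral_of_nonneg_ae (Eventually.of_forall hnn)
      ((continuous_gaussKernel_right x).mul
        (continuous_gaussKernel_left y)).measurable.aestronglyMeasurable, h,
      ENNReal.toReal_ofReal hpos.le]

end Kernel

/-- In a metric space carrying a σ-finite measure that charges every ball, an `ε`-separated set
indexes disjoint balls of positive measure and so is countable; hence the space is second
countable. -/
lemma secondCountable_of_ball_pos {X : Type*} [MetricSpace X] [MeasurableSpace X] [BorelSpace X]
    (μ : Measure X) [SigmaFinite μ]
    (hsupp : ∀ (x : X) (r : ℝ), 0 < r → 0 < μ (Metric.ball x r)) :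
    SecondCountableTopology X := by
  refine Metric.secondCountable_of_almost_dense_set fun ε hε => ?_
  obtain ⟨N, hN⟩ := zorn_subset {N : Set X | N.Pairwise fun a b => ε < dist a b} (by
    intro c hc hchain
    exact ⟨⋃₀ c, (pairwise_sUnion hchain.directedOn).2 fun a ha => hc ha,
      fun s hs => subset_sUnion_of_mem hs⟩)
  refine ⟨N, ?_, fun x => ?_⟩
  · have h := Measure.countable_meas_pos_of_disjoint_iUnion (μ := μ)
      (As := fun i : N => Metric.ball (i : X) (ε / 2)) (fun i => measurableSet_ball) (by
        intro i j hij
        refine Metric.ball_disjoint_ball ?_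
        have := hN.prop i.2 j.2 (fun h => hij (Subtype.ext h))
        linarith)
    have huniv : {i : N | 0 < μ (Metric.ball (i : X) (ε / 2))} = univ :=
      eq_univ_of_forall fun i => hsupp _ _ (half_pos hε)
    rw [huniv, countable_univ_iff] at h
    exact h
  · by_contra! hx
    have hins : insert x N ∈ {N : Set X | N.Pairwise fun a b => ε < dist a b} :=
      hN.prop.insert fun b hb _ => ⟨hx b hb, by rw [dist_comm]; exact hx b hb⟩
    have hxN : x ∈ N := hN.le_of_ge hins (subset_insert x N) (mem_insert x N)
    have := hx x hxN
    rw [dist_self] at this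
    linarith

open ProbabilityTheory in
/-- Uniqueness of analytic continuation for Laplace transforms of finite measures: a formula that
is real analytic on `(0, ∞)` and valid for large `w` is valid for all `w > 0`. -/
lemma integral_mul_exp_neg_eq_of_lt {X : Type*} [MeasurableSpace X] {μ : Measure X}
    {f g : X → ℝ} {G : ℝ → ℝ} {w₀ : ℝ} (hw₀ : 0 < w₀) (hf : Measurable f) (hf0 : ∀ z, 0 ≤ f z)
    (hfint : Integrable f μ) (hg : Measurable g) (hg0 : ∀ z, 0 ≤ g z)
    (hG : AnalyticOnNhd ℝ G (Ioi 0))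
    (h : ∀ w, w₀ < w → ∫ z, f z * Real.exp (w * -g z) ∂μ = G w) {w : ℝ} (hw : 0 < w) :
    ∫ z, f z * Real.exp (w * -g z) ∂μ = G w := by
  set ν := μ.withDensity fun z => ENNReal.ofReal (f z) with hν
  have hmgf : ∀ w, mgf (fun z => -g z) ν w = ∫ z, f z * Real.exp (w * -g z) ∂μ := by
    intro w
    rw [mgf, hν, integral_withDensity_eq_integral_toReal_smul hf.ennreal_ofReal
      (Eventually.of_forall fun _ => ENNReal.ofReal_lt_top)]
    refine integral_congr_ae (Eventually.of_forall fun z => ?_)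
    simp [ENNReal.toReal_ofReal (hf0 z)]
  have : IsFiniteMeasure ν := isFiniteMeasure_withDensity_ofReal hfint.2
  have hsub : Ioi (0 : ℝ) ⊆ interior (integrableExpSet (fun z => -g z) ν) := by
    refine interior_maximal (fun w hw => ?_) isOpen_Ioi
    refine Integrable.of_bound (C := 1) (by fun_prop) (Eventually.of_forall fun z => ?_)
    rw [Real.norm_eq_abs, abs_of_pos (Real.exp_pos _), Real.exp_le_one_iff]
    have := mul_nonneg (le_of_lt (mem_Ioi.1 hw)) (hg0 z)
    linarith
  rw [← hmgf]
  refine (analyticOnNhd_mgf.mono hsub).eqOn_of_preconnected_of_eventuallyEq hG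
    isPreconnected_Ioi (z₀ := w₀ + 1) (mem_Ioi.2 (by linarith)) ?_ (mem_Ioi.2 hw)
  filter_upwards [Ioi_mem_nhds (show w₀ < w₀ + 1 by linarith)] with v hv
  rw [hmgf, h v hv]

section Extension

variable {X : Type*} [MetricSpace X] [MeasurableSpace X] [BorelSpace X] {μ : Measure X}
  {α T : ℝ}

lemma integrable_gaussKernel
    (hCK : ∀ (x y : X) (s t : ℝ), 0 < s → s < T → 0 < t → t < T →
      ∫ z, gaussKernel α t x z * gaussKernel α s z y ∂μ = gaussKernel α (t + s) x y)
    {t : ℝ} (ht : 0 < t) (htT : t < T / 2) (x : X) : Integrable (gaussKernel α t x) μ := by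
  have h2t : 0 < 2 * t := by positivity
  have hint : Integrable (fun z => gaussKernel α (2 * t) x z * gaussKernel α (2 * t) z x) μ := by
    by_contra hn
    have h := hCK x x (2 * t) (2 * t) h2t (by linarith) h2t (by linarith)
    rw [integral_undef hn] at h
    exact (gaussKernel_pos (add_pos h2t h2t) x x).ne h
  have hc : 0 < (4 * π * (2 * t)) ^ (-(α / 2)) := by positivity
  have hc' : 0 < (4 * π * t) ^ (-(α / 2)) := by positivity
  convert hint.const_mul ((4 * π * t) ^ (-(α / 2)) / ((4 * π * (2 * t)) ^ (-(α / 2))) ^ 2) using 1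
  ext z
  -- the exponents combine as `1 / (8 t) + 1 / (8 t) = 1 / (4 t)`
  have he : -(dist x z) ^ 2 / (4 * t) =
      -(dist x z) ^ 2 / (4 * (2 * t)) + -(dist x z) ^ 2 / (4 * (2 * t)) := by
    field_simp
    ring
  simp only [gaussKernel, dist_comm z x]
  rw [he, Real.exp_add]
  field_simp

/-- The identity holds for every `s > 0` as soon as `t < T / 2`. -/
lemma chapmanKolmogorov_of_lt (hT : 0 < T)
    (hCK : ∀ (x y : X) (s t : ℝ), 0 < s → s < T → 0 < t → t < T →
      ∫ z, gaussKernel α t x z * gaussKernel α s z y ∂μ = gaussKernel α (t + s) x y)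
    {s t : ℝ} (hs : 0 < s) (ht : 0 < t) (htT : t < T / 2) (x y : X) :
    ∫ z, gaussKernel α t x z * gaussKernel α s z y ∂μ = gaussKernel α (t + s) x y := by
  -- the closed form of the Laplace transform, as a function of `w = 1 / s`
  set G : ℝ → ℝ := fun w => Real.exp (Real.log (1 + t * w) * (-(α / 2))) *
    Real.exp (-(dist x y) ^ 2 * w / (4 * (1 + t * w))) with hGdef
  have hG : AnalyticOnNhd ℝ G (Ioi 0) := by
    intro w hw
    have hw : 0 < w := hw
    have h1 : 0 < 1 + t * w := by positivity
    have ha : AnalyticAt ℝ (fun w : ℝ => 1 + t * w) w := by fun_prop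
    have h4 : 4 * (1 + t * w) ≠ 0 := by positivity
    refine AnalyticAt.mul (AnalyticAt.rexp' ((ha.log h1).mul analyticAt_const))
      (AnalyticAt.rexp' (AnalyticAt.div (by fun_prop) (by fun_prop) h4))
  -- dividing the identity by `(4 π s) ^ (-α / 2)` turns it into a formula in `w = 1 / s`
  have hker : ∀ s, 0 < s → ∀ z, gaussKernel α s z y =
      (4 * π * s) ^ (-(α / 2)) * Real.exp (s⁻¹ * -((dist z y) ^ 2 / 4)) := by
    intro s hs z
    rw [gaussKernel]
    congr 2
    field_simp
  have hrhs : ∀ s, 0 < s → gaussKernel α (t + s) x y = (4 * π * s) ^ (-(α / 2)) * G s⁻¹ := by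
    intro s hs
    have h1 : 0 < 1 + t * s⁻¹ := by positivity
    have e1 : 4 * π * (t + s) = (4 * π * s) * (1 + t * s⁻¹) := by
      field_simp
      ring
    have e2 : -(dist x y) ^ 2 / (4 * (t + s)) =
        -(dist x y) ^ 2 * s⁻¹ / (4 * (1 + t * s⁻¹)) := by
      field_simp
      ring
    simp only [gaussKernel, hGdef]
    rw [e2, e1, Real.mul_rpow (by positivity) h1.le, Real.rpow_def_of_pos h1, mul_assoc]
  have hlhs : ∀ s, 0 < s → ∫ z, gaussKernel α t x z * gaussKernel α s z y ∂μ =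
      (4 * π * s) ^ (-(α / 2)) *
        ∫ z, gaussKernel α t x z * Real.exp (s⁻¹ * -((dist z y) ^ 2 / 4)) ∂μ := by
    intro s hs
    rw [← integral_const_mul]
    refine integral_congr_ae (Eventually.of_forall fun z => ?_)
    simp only [hker s hs z]
    ring
  rw [hlhs s hs, hrhs s hs]
  congr 1
  refine integral_mul_exp_neg_eq_of_lt (g := fun z => (dist z y) ^ 2 / 4) (inv_pos.2 hT)
    (continuous_gaussKernel_right x).measurable (fun z => (gaussKernel_pos ht x z).le)
    (integrable_gaussKernel hCK ht htT x) (by fun_prop) (fun z => by positivity) hG ?_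
    (inv_pos.2 hs)
  intro w hw
  have hw0 : 0 < w := (inv_pos.2 hT).trans hw
  have hwi : 0 < w⁻¹ := inv_pos.2 hw0
  have h := hCK x y w⁻¹ t hwi (inv_lt_of_inv_lt₀ hT hw) ht (by linarith)
  rw [hlhs _ hwi, hrhs _ hwi, inv_inv] at h
  have hc : 0 < (4 * π * w⁻¹) ^ (-(α / 2)) := by positivity
  exact mul_left_cancel₀ hc.ne' h

/-- If the identity holds for one fixed step `u` and every `s > 0`, it holds for every positive
multiple of `u`, by associativity of kernel composition. -/
lemma lintegral_chapmanKolmogorov_nsmul [SecondCountableTopology X] [SFinite μ] {u : ℝ}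
    (hu : 0 < u)
    (h : ∀ s, 0 < s → ∀ x y : X,
      ∫⁻ z, ENNReal.ofReal (gaussKernel α u x z) * ENNReal.ofReal (gaussKernel α s z y) ∂μ =
        ENNReal.ofReal (gaussKernel α (u + s) x y)) (n : ℕ) :
    ∀ s, 0 < s → ∀ x y : X,
      ∫⁻ z, ENNReal.ofReal (gaussKernel α ((n + 1) * u) x z) *
          ENNReal.ofReal (gaussKernel α s z y) ∂μ =
        ENNReal.ofReal (gaussKernel α ((n + 1) * u + s) x y) := by
  induction n with
  | zero => simpa using h
  | succ n ih =>
    intro s hs x y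
    have hnu : 0 < (n + 1) * u := by positivity
    have hm : ∀ t, Measurable fun p : X × X => ENNReal.ofReal (gaussKernel α t p.1 p.2) :=
      fun t => continuous_gaussKernel.measurable.ennreal_ofReal
    have hml : ∀ t (y : X), Measurable fun x => ENNReal.ofReal (gaussKernel α t x y) :=
      fun t y => (continuous_gaussKernel_left y).measurable.ennreal_ofReal
    have hmr : ∀ t (x : X), Measurable fun y => ENNReal.ofReal (gaussKernel α t x y) :=
      fun t x => (continuous_gaussKernel_right x).measurable.ennreal_ofReal
    have e : ((n + 1 : ℕ) + 1 : ℝ) * u = u + (n + 1) * u := by push_cast; ring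
    rw [e]
    calc ∫⁻ z, ENNReal.ofReal (gaussKernel α (u + (n + 1) * u) x z) *
          ENNReal.ofReal (gaussKernel α s z y) ∂μ
        = ∫⁻ z, ∫⁻ v, ENNReal.ofReal (gaussKernel α u x v) *
            ENNReal.ofReal (gaussKernel α ((n + 1) * u) v z) *
            ENNReal.ofReal (gaussKernel α s z y) ∂μ ∂μ := by
          refine lintegral_congr fun z => ?_
          rw [← h _ hnu x z, lintegral_mul_const' _ _ ENNReal.ofReal_ne_top]
      _ = ∫⁻ v, ∫⁻ z, ENNReal.ofReal (gaussKernel α u x v) *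
            ENNReal.ofReal (gaussKernel α ((n + 1) * u) v z) *
            ENNReal.ofReal (gaussKernel α s z y) ∂μ ∂μ := by
          refine lintegral_lintegral_swap (Measurable.aemeasurable ?_)
          exact (((hmr u x).comp measurable_snd).mul ((hm _).comp measurable_swap)).mul
            ((hml s y).comp measurable_fst)
      _ = ∫⁻ v, ENNReal.ofReal (gaussKernel α u x v) *
            ENNReal.ofReal (gaussKernel α ((n + 1) * u + s) v y) ∂μ := by
          refine lintegral_congr fun v => ?_
          rw [← ih s hs v y, ← lintegral_const_mul' _ _ ENNReal.ofReal_ne_top]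
          simp_rw [mul_assoc]
      _ = ENNReal.ofReal (gaussKernel α (u + (n + 1) * u + s) x y) := by
          rw [h _ (by positivity) x y, add_assoc]

/-- Total mass one follows from the identity with `s → ∞`. -/
lemma integral_gaussKernel_eq_one {t : ℝ} (ht : 0 < t) (x : X)
    (h : ∀ s, 0 < s →
      ∫⁻ z, ENNReal.ofReal (gaussKernel α t x z) * ENNReal.ofReal (gaussKernel α s z x) ∂μ =
        ENNReal.ofReal (gaussKernel α (t + s) x x)) :
    ∫ z, gaussKernel α t x z ∂μ = 1 := by
  set F : ℕ → X → ℝ≥0∞ := fun n z => ENNReal.ofReal (gaussKernel α t x z *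
    Real.exp (-(dist z x) ^ 2 / (4 * ((n : ℝ) + 1)))) with hF
  have hlin : ∀ n : ℕ, ∫⁻ z, F n z ∂μ = ENNReal.ofReal ((1 + t / ((n : ℝ) + 1)) ^ (-(α / 2))) := by
    intro n
    have hn : (0 : ℝ) < (n : ℝ) + 1 := by positivity
    have hc : 0 < (4 * π * ((n : ℝ) + 1)) ^ (-(α / 2)) := by positivity
    have hFn : ∀ z, F n z = ENNReal.ofReal ((4 * π * ((n : ℝ) + 1)) ^ (-(α / 2)))⁻¹ *
        (ENNReal.ofReal (gaussKernel α t x z) *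
          ENNReal.ofReal (gaussKernel α ((n : ℝ) + 1) z x)) := by
      intro z
      rw [← ENNReal.ofReal_mul (gaussKernel_pos ht x z).le, ← ENNReal.ofReal_mul (by positivity)]
      simp only [hF]
      congr 1
      rw [gaussKernel, gaussKernel]
      field_simp
    simp_rw [hFn]
    rw [lintegral_const_mul' _ _ ENNReal.ofReal_ne_top, h _ hn,
      ← ENNReal.ofReal_mul (by positivity)]
    congr 1
    have e : 4 * π * (t + ((n : ℝ) + 1)) = (4 * π * ((n : ℝ) + 1)) * (1 + t / ((n : ℝ) + 1)) := by
      field_simp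
      ring
    have hsplit := Real.mul_rpow (x := 4 * π * ((n : ℝ) + 1)) (y := 1 + t / ((n : ℝ) + 1))
      (z := -(α / 2)) (by positivity) (by positivity)
    rw [gaussKernel, e, hsplit]
    simp only [dist_self]
    rw [← mul_assoc, ← mul_assoc, inv_mul_cancel₀ hc.ne']
    simp
  have hnt : Tendsto (fun n : ℕ => (n : ℝ) + 1) atTop atTop :=
    tendsto_atTop_add_const_right _ _ tendsto_natCast_atTop_atTop
  have hlim1 : Tendsto (fun n => ∫⁻ z, F n z ∂μ) atTop (𝓝 1) := by
    simp_rw [hlin]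
    have h0 : Tendsto (fun n : ℕ => 1 + t / ((n : ℝ) + 1)) atTop (𝓝 (1 + 0)) :=
      tendsto_const_nhds.add (hnt.const_div_atTop t)
    have h1 := ENNReal.tendsto_ofReal (h0.rpow_const (p := -(α / 2)) (Or.inl (by norm_num)))
    simpa using h1
  have hlim2 : Tendsto (fun n => ∫⁻ z, F n z ∂μ) atTop
      (𝓝 (∫⁻ z, ENNReal.ofReal (gaussKernel α t x z) ∂μ)) := by
    refine lintegral_tendsto_of_tendsto_of_monotone (fun n => ?_)
      (Eventually.of_forall fun z => ?_) (Eventually.of_forall fun z => ?_)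
    · exact ((continuous_gaussKernel_right x).mul
        (by fun_prop)).measurable.ennreal_ofReal.aemeasurable
    · intro m n hmn
      have hmn' : (m : ℝ) ≤ n := by exact_mod_cast hmn
      refine ENNReal.ofReal_le_ofReal (mul_le_mul_of_nonneg_left ?_ (gaussKernel_pos ht x z).le)
      rw [Real.exp_le_exp, neg_div, neg_div, neg_le_neg_iff]
      gcongr
    · have h0 : Tendsto (fun n : ℕ => -(dist z x) ^ 2 / (4 * ((n : ℝ) + 1))) atTop (𝓝 0) :=
        (hnt.const_mul_atTop (by norm_num : (0 : ℝ) < 4)).const_div_atTop _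
      have h1 := ENNReal.tendsto_ofReal
        (((Real.continuous_exp.tendsto 0).comp h0).const_mul (gaussKernel α t x z))
      simpa using h1
  rw [integral_eq_lintegral_of_nonneg_ae
    (Eventually.of_forall fun z => (gaussKernel_pos ht x z).le)
    (continuous_gaussKernel_right x).measurable.aestronglyMeasurable,
    tendsto_nhds_unique hlim2 hlim1, ENNReal.toReal_one]

end Extension

/-- **Extension of the Gaussian Chapman–Kolmogorov identity in time.** Let `(X,d,μ)` be a
metric measure space, with `μ` a σ-finite regular Borel measure of full support which is
locally doubling. If the Gaussian Chapman–Kolmogorov identity holds for all times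
`s, t ∈ (0,T)`, then it holds for all positive times, and moreover
`∫ P_α(x,z,t) dμ(z) = 1` for every `x` and every `t > 0`. -/
theorem gaussian_chapman_kolmogorov_extension
    {X : Type*} [MetricSpace X] [MeasurableSpace X] [BorelSpace X]
    (μ : Measure X) [SigmaFinite μ] [μ.Regular]
    (hsupp : ∀ (x : X) (r : ℝ), 0 < r → 0 < μ (Metric.ball x r))
    (α T : ℝ) (hα : 0 < α) (hT : 0 < T)
    (r₀ C_D : ℝ) (hr₀ : 0 < r₀) (hCD : 0 < C_D)
    (hdouble : ∀ (x : X) (r : ℝ), 0 < r → r < r₀ →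
      μ (Metric.ball x (2 * r)) ≤ ENNReal.ofReal C_D * μ (Metric.ball x r))
    (hCK : ∀ (x y : X) (s t : ℝ), 0 < s → s < T → 0 < t → t < T →
      (∫ z, ((4 * π * t) ^ (-(α / 2)) * Real.exp (-(dist x z) ^ 2 / (4 * t))) *
        ((4 * π * s) ^ (-(α / 2)) * Real.exp (-(dist z y) ^ 2 / (4 * s))) ∂μ)
      = (4 * π * (t + s)) ^ (-(α / 2)) *
          Real.exp (-(dist x y) ^ 2 / (4 * (t + s)))) :
    (∀ (x y : X) (s t : ℝ), 0 < s → 0 < t →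
      (∫ z, ((4 * π * t) ^ (-(α / 2)) * Real.exp (-(dist x z) ^ 2 / (4 * t))) *
        ((4 * π * s) ^ (-(α / 2)) * Real.exp (-(dist z y) ^ 2 / (4 * s))) ∂μ)
      = (4 * π * (t + s)) ^ (-(α / 2)) *
          Real.exp (-(dist x y) ^ 2 / (4 * (t + s)))) ∧
    (∀ (x : X) (t : ℝ), 0 < t →
      (∫ z, (4 * π * t) ^ (-(α / 2)) * Real.exp (-(dist x z) ^ 2 / (4 * t)) ∂μ) = 1) := by
  have := secondCountable_of_ball_pos μ hsupp
  have hCK' : ∀ (x y : X) (s t : ℝ), 0 < s → s < T → 0 < t → t < T →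
      ∫ z, gaussKernel α t x z * gaussKernel α s z y ∂μ = gaussKernel α (t + s) x y := hCK
  have key : ∀ (x y : X) (s t : ℝ), 0 < s → 0 < t →
      ∫⁻ z, ENNReal.ofReal (gaussKernel α t x z) * ENNReal.ofReal (gaussKernel α s z y) ∂μ =
        ENNReal.ofReal (gaussKernel α (t + s) x y) := by
    intro x y s t hs ht
    obtain ⟨n, hn⟩ := exists_nat_gt (t / (T / 2))
    have hn1 : (0 : ℝ) < (n : ℝ) + 1 := by positivity
    have hu : 0 < t / ((n : ℝ) + 1) := by positivity
    have huT : t / ((n : ℝ) + 1) < T / 2 := by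
      rw [div_lt_iff₀ (by positivity)] at hn ⊢
      nlinarith
    have h := lintegral_chapmanKolmogorov_nsmul (μ := μ) (α := α) hu (fun s hs x y =>
      (integral_gaussKernel_iff hs hu x y).1 (chapmanKolmogorov_of_lt hT hCK' hs hu huT x y))
      n s hs x y
    rwa [mul_div_cancel₀ t hn1.ne'] at h
  exact ⟨fun x y s t hs ht => (integral_gaussKernel_iff hs ht x y).2 (key x y s t hs ht),
    fun x t ht => integral_gaussKernel_eq_one ht x fun s hs => key x x s t hs ht⟩
end

section
/- Let α, β, γ ∈ [0,π] with α + β ≤ π. Suppose that for all t, s, r > 0 the inequality √((t−s)² + 4ts sin²(α/2)) + √((s−r)² + 4sr sin²(β/2)) ≥ √((t−r)² + 4tr sin²(γ/2)) holds. Then γ ≤ α + β. -/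
open Real Set

/-!
When `α + β = π` there is nothing to prove. Otherwise, place three planar points at angles
`-α`, `0`, `β`, the outer two on the unit circle and the middle one where the chord joining them
meets the ray of angle `0`, i.e. at radius `s = cos ((α + β) / 2) / cos ((α - β) / 2) > 0`.
By collinearity the two distances to the middle point add up to the length
`2 sin ((α + β) / 2)` of the chord, so the hypothesis at `(t, s, r) = (1, s, 1)` reads
`sin (γ / 2) ≤ sin ((α + β) / 2)`, and `sin` is strictly increasing on `[0, π / 2]`.
-/

/-- With `u = (α + β) / 2` and `v = (α - β) / 2`, this is the squared length of the segment from the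
unit-circle endpoint of the chord to its point on the middle ray. -/
lemma chord_segment_sq (u v : ℝ) (hv : cos v ≠ 0) :
    (1 - cos u / cos v) ^ 2 + 4 * (cos u / cos v) * sin ((u + v) / 2) ^ 2
      = (sin (u + v) / cos v) ^ 2 := by
  have h1 : sin ((u + v) / 2) ^ 2 = (1 - cos (u + v)) / 2 := by
    rw [sin_sq_eq_half_sub, mul_div_cancel₀ _ two_ne_zero]
    ring
  rw [h1, cos_add, sin_add]
  field_simp
  linear_combination (-2 * cos v ^ 2) * sin_sq_add_cos_sq u - 2 * cos u ^ 2 * sin_sq_add_cos_sq v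

/-- **Triangle inequality for the angular distance on the cross-section of a cone.**
If `α, β, γ ∈ [0,π]` with `α + β ≤ π`, and the Euclidean cone triangle inequality
`√((t−s)² + 4ts sin²(α/2)) + √((s−r)² + 4sr sin²(β/2)) ≥ √((t−r)² + 4tr sin²(γ/2))`
holds for all `t, s, r > 0`, then `γ ≤ α + β`. -/
theorem cone_angle_triangle_inequality
    (α β γ : ℝ)
    (hα : α ∈ Set.Icc 0 π) (hβ : β ∈ Set.Icc 0 π) (hγ : γ ∈ Set.Icc 0 π)
    (hsum : α + β ≤ π)
    (h : ∀ t s r : ℝ, 0 < t → 0 < s → 0 < r →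
      Real.sqrt ((t - r) ^ 2 + 4 * t * r * Real.sin (γ / 2) ^ 2)
        ≤ Real.sqrt ((t - s) ^ 2 + 4 * t * s * Real.sin (α / 2) ^ 2)
          + Real.sqrt ((s - r) ^ 2 + 4 * s * r * Real.sin (β / 2) ^ 2)) :
    γ ≤ α + β := by
  obtain ⟨hα0, hαπ⟩ := hα
  obtain ⟨hβ0, hβπ⟩ := hβ
  obtain ⟨hγ0, hγπ⟩ := hγ
  rcases hsum.eq_or_lt with heq | hlt
  · linarith
  obtain ⟨u, hu⟩ : ∃ u, u = (α + β) / 2 := ⟨_, rfl⟩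
  obtain ⟨v, hv⟩ : ∃ v, v = (α - β) / 2 := ⟨_, rfl⟩
  obtain rfl : α = u + v := by linarith
  obtain rfl : β = u - v := by linarith
  have hcu : 0 < cos u := cos_pos_of_mem_Ioo ⟨by linarith, by linarith⟩
  have hcv : 0 < cos v := cos_pos_of_mem_Ioo ⟨by linarith, by linarith⟩
  have key := h 1 (cos u / cos v) 1 one_pos (div_pos hcu hcv) one_pos
  have e1 := chord_segment_sq u v hcv.ne'
  have e2 := chord_segment_sq u (-v) (by rw [cos_neg]; exact hcv.ne')
  rw [cos_neg, ← sub_eq_add_neg] at e2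
  have e0 : (1 - 1 : ℝ) ^ 2 + 4 * 1 * 1 * sin (γ / 2) ^ 2 = (2 * sin (γ / 2)) ^ 2 := by ring
  have e1' : (1 - cos u / cos v) ^ 2 + 4 * 1 * (cos u / cos v) * sin ((u + v) / 2) ^ 2
      = (sin (u + v) / cos v) ^ 2 := by rw [← e1]; ring
  have e2' : (cos u / cos v - 1) ^ 2 + 4 * (cos u / cos v) * 1 * sin ((u - v) / 2) ^ 2
      = (sin (u - v) / cos v) ^ 2 := by rw [← e2]; ring
  have hγs : 0 ≤ sin (γ / 2) := sin_nonneg_of_nonneg_of_le_pi (by linarith) (by linarith)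
  rw [e0, e1', e2', sqrt_sq (by positivity),
    sqrt_sq (div_nonneg (sin_nonneg_of_nonneg_of_le_pi hα0 hαπ) hcv.le),
    sqrt_sq (div_nonneg (sin_nonneg_of_nonneg_of_le_pi hβ0 hβπ) hcv.le)] at key
  have hchord : sin (u + v) / cos v + sin (u - v) / cos v = 2 * sin u := by
    rw [sin_add, sin_sub]
    field_simp
    ring
  rw [hchord] at key
  by_contra! hcon
  have hsin : sin u < sin (γ / 2) :=
    sin_lt_sin_of_lt_of_le_pi_div_two (by linarith) (by linarith) (by linarith)
  linarith
end

section
/- Let (X,d) be a complete proper metric space (closed balls are compact) with a Borel measure μ, and let p : X×X×(0,∞) → (0,∞) be a measurable function, symmetric in its first two arguments, satisfying the Chapman–Kolmogorov identity ∫_X p(x,z,t) p(z,y,s) dμ(z) = p(x,y,t+s) for all x,y ∈ X and s,t > 0. Assume that −4t·log p(x,y,t) → d(x,y)² as t → 0⁺, locally uniformly in (x,y) ∈ X×X. Then (X,d) is a geodesic space; in particular any two points x,y admit a midpoint m with d(x,m) = d(m,y) = d(x,y)/2. -/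
open MeasureTheory Metric Real Set Filter
open scoped ENNReal NNReal Topology

/-!
The heart of the matter is the existence of midpoints; in a proper space these give geodesics by
dyadic subdivision (`exists_geodesic_of_midpoints`).

Write `D = dist x y` and suppose that `x` and `y`, the latter in the support of `μ`, have no
midpoint in the support. Then `d(x,z)² + d(z,y)²` exceeds `D² / 2` by a fixed amount on bounded
subsets of the support. In the Chapman–Kolmogorov identity
`p(x,y,2t) = ∫ p(x,z,t) p(z,y,t) dμ(z)` the left side is about `exp(-D² / (8t))`, while the integral
over a large ball is exponentially smaller. So the mass would have to come from infinity, where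
the assumed asymptotics, being only locally uniform, say nothing directly.

This is excluded by a Gaussian tail estimate (`heatFlow_tail`) for the kernel smeared over a small
ball `B` around `y`. Put `u_t = ∫_B p(w,·,t) dμ(w)`. By symmetry and Chapman–Kolmogorov
`⟨u_s, u_t⟩` depends on `s + t` only, so at equally spaced times the `u`s have a Hankel Gram matrix.
The spectral theorem for the compressed shift on their span (`exists_expSum_of_hankel`) shows that
`t ↦ ⟨u_t, g⟩` agrees on each dyadic grid with an exponential sum, bounded by `C ‖g‖` with `C`
independent of the grid. In the limit over finer grids one obtains a bounded holomorphic function on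
a strip. If `g` is supported in a bounded annulus at distance at least `ρ` from `B`, the local
asymptotics show that this function is `O(exp(-a / t))` as `t → 0` whenever `4a < ρ²`, and
Phragmén–Lindelöf in the variable `1 / t` makes the constant independent of the outer radius
of the annulus (`abs_le_exp_of_expSum`). No strong continuity of the semigroup is needed.

Finally the support of `μ` is all of `X`: a point outside would have a nearest point in the support,
and the midpoint of the two would be nearer still.
-/

/-! ### From midpoints to geodesics -/

/-- Iterated bisection: a chain of `2 ^ n` steps, each of length at most `dist x y / 2 ^ n`. -/
lemma exists_chain {X : Type*} [MetricSpace X]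
    (hmid : ∀ x y : X, ∃ m : X, dist x m = dist x y / 2 ∧ dist m y = dist x y / 2) (n : ℕ) :
    ∀ x y : X, ∃ c : ℕ → X, c 0 = x ∧ c (2 ^ n) = y ∧
      ∀ i < 2 ^ n, dist (c i) (c (i + 1)) ≤ dist x y / 2 ^ n := by
  induction n with
  | zero =>
    intro x y
    refine ⟨fun i => if i = 0 then x else y, by simp, by simp, ?_⟩
    intro i hi
    have : i = 0 := by simpa using hi
    simp [this]
  | succ n ih =>
    intro x y
    obtain ⟨m, h1, h2⟩ := hmid x y
    obtain ⟨c, c0, c1, hc⟩ := ih x m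
    obtain ⟨d, d0, d1, hd⟩ := ih m y
    refine ⟨fun i => if i ≤ 2 ^ n then c i else d (i - 2 ^ n), by simp [c0], ?_, ?_⟩
    · have : ¬ (2 ^ (n + 1) ≤ 2 ^ n) := by
        have := Nat.two_pow_pos n
        rw [pow_succ]; omega
      simp only [this, if_false]
      rw [pow_succ, show 2 ^ n * 2 - 2 ^ n = 2 ^ n by omega, d1]
    · intro i hi
      have e : dist x y / 2 ^ (n + 1) = dist x y / 2 / 2 ^ n := by
        rw [pow_succ]; field_simp
      rw [e]
      rcases lt_trichotomy i (2 ^ n) with h | h | h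
      · simp only [h.le, if_true, show i + 1 ≤ 2 ^ n from h]
        rw [← h1]; exact hc i h
      · subst h
        have : ¬ (2 ^ n + 1 ≤ 2 ^ n) := by omega
        simp only [le_refl, if_true, this, if_false, c1, ← d0]
        have := hd 0 (by positivity)
        rw [← h2]
        simpa [d0] using this
      · have a1 : ¬ (i ≤ 2 ^ n) := by omega
        have a2 : ¬ (i + 1 ≤ 2 ^ n) := by omega
        simp only [a1, a2, if_false]
        rw [← h2, show i + 1 - 2 ^ n = (i - 2 ^ n) + 1 by omega]
        exact hd _ (by rw [pow_succ] at hi; omega)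

/-- In a proper space, midpoints give geodesics: the dyadic chains converge pointwise along an
ultrafilter to a `1`-Lipschitz curve from `x` to `y` parametrised on `[0, dist x y]`, and such a
curve is an isometric embedding by the triangle inequality. -/
lemma exists_geodesic_of_midpoints {X : Type*} [MetricSpace X] [ProperSpace X]
    (hmid : ∀ x y : X, ∃ m : X, dist x m = dist x y / 2 ∧ dist m y = dist x y / 2) (x y : X) :
    ∃ γ : ℝ → X, γ 0 = x ∧ γ (dist x y) = y ∧
      ∀ s ∈ Set.Icc (0 : ℝ) (dist x y), ∀ t ∈ Set.Icc (0 : ℝ) (dist x y),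
        dist (γ s) (γ t) = |s - t| := by
  rcases eq_or_ne x y with rfl | hxy
  · refine ⟨fun _ => x, rfl, rfl, ?_⟩
    intro s hs t ht
    simp only [dist_self, Set.Icc_self, Set.mem_singleton_iff] at hs ht ⊢
    simp [hs, ht]
  set D := dist x y with hD
  have hDpos : 0 < D := dist_pos.mpr hxy
  choose c c0 c1 hc using fun n => exists_chain hmid n x y
  have hlip : ∀ n i j, i ≤ j → j ≤ 2 ^ n → dist (c n i) (c n j) ≤ (j - i : ℝ) * (D / 2 ^ n) := by
    intro n i j hij hj
    refine (dist_le_Ico_sum_of_dist_le (f := c n) (d := fun _ => D / 2 ^ n) hij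
      (fun {k} _ hk => hc n k (by omega))).trans ?_
    simp [Nat.cast_sub hij]
  -- step function approximations of the geodesic on the dyadic grid
  set γn : ℕ → ℝ → X := fun n s => c n ⌊s / D * 2 ^ n⌋₊ with hγn
  have hfl : ∀ n s, s ∈ Set.Icc 0 D → ⌊s / D * 2 ^ n⌋₊ ≤ 2 ^ n := by
    intro n s hs
    have : s / D * 2 ^ n ≤ ((2 ^ n : ℕ) : ℝ) := by
      push_cast
      have : s / D ≤ 1 := (div_le_one hDpos).mpr hs.2
      nlinarith [show (0 : ℝ) < 2 ^ n by positivity]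
    exact Nat.floor_le_of_le this
  have hγle : ∀ n, ∀ s ∈ Set.Icc 0 D, ∀ t ∈ Set.Icc 0 D, s ≤ t →
      dist (γn n s) (γn n t) ≤ (t - s) + D / 2 ^ n := by
    intro n s hs t ht hst
    refine (hlip n _ _ (Nat.floor_mono (by gcongr)) (hfl n t ht)).trans ?_
    have h1 : (⌊t / D * 2 ^ n⌋₊ : ℝ) ≤ t / D * 2 ^ n :=
      Nat.floor_le (mul_nonneg (div_nonneg ht.1 hDpos.le) (by positivity))
    have h2 := Nat.lt_floor_add_one (s / D * 2 ^ n)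
    have h3 : (⌊t / D * 2 ^ n⌋₊ : ℝ) - ⌊s / D * 2 ^ n⌋₊ ≤ (t - s) / D * 2 ^ n + 1 := by
      rw [sub_div, sub_mul]; linarith
    calc _ ≤ ((t - s) / D * 2 ^ n + 1) * (D / 2 ^ n) := by gcongr
      _ = _ := by field_simp
  set U : Ultrafilter ℕ := hyperfilter ℕ with hU
  have hUle : (U : Filter ℕ) ≤ atTop := by
    rw [← Nat.cofinite_eq_atTop]; exact hyperfilter_le_cofinite
  have hex : ∀ s ∈ Set.Icc 0 D, ∃ z, Tendsto (fun n => γn n s) U (𝓝 z) := by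
    intro s hs
    have hK := isCompact_closedBall x (D + D)
    have : (U.map (fun n => γn n s) : Filter X) ≤ 𝓟 (closedBall x (D + D)) := by
      rw [le_principal_iff]
      refine Filter.Eventually.of_forall (f := (U : Filter ℕ)) fun n => ?_
      have h := hγle n 0 ⟨le_rfl, hDpos.le⟩ s hs hs.1
      have h0 : γn n 0 = x := by simp [hγn, c0]
      rw [h0] at h
      change γn n s ∈ closedBall x (D + D)
      rw [mem_closedBall, dist_comm]
      have : D / 2 ^ n ≤ D := div_le_self hDpos.le (one_le_pow₀ (by norm_num))
      linarith [hs.2]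
    obtain ⟨z, _, hz⟩ := hK.ultrafilter_le_nhds _ this
    exact ⟨z, hz⟩
  have : Nonempty X := ⟨x⟩
  choose! γ hγ using hex
  have h0 : γ 0 = x := by
    refine tendsto_nhds_unique (hγ 0 ⟨le_rfl, hDpos.le⟩) ?_
    have : (fun n => γn n 0) = fun _ => x := by funext n; simp [hγn, c0]
    rw [this]; exact tendsto_const_nhds
  have h1 : γ D = y := by
    refine tendsto_nhds_unique (hγ D ⟨hDpos.le, le_rfl⟩) ?_
    have : (fun n => γn n D) = fun _ => y := by
      funext n
      have e : D / D * (2 : ℝ) ^ n = ((2 ^ n : ℕ) : ℝ) := by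
        rw [div_self hDpos.ne']; simp
      simp only [hγn]
      rw [e, Nat.floor_natCast, c1]
    rw [this]; exact tendsto_const_nhds
  have hle : ∀ s ∈ Set.Icc 0 D, ∀ t ∈ Set.Icc 0 D, s ≤ t → dist (γ s) (γ t) ≤ t - s := by
    intro s hs t ht hst
    have l1 : Tendsto (fun n => dist (γn n s) (γn n t)) U (𝓝 (dist (γ s) (γ t))) :=
      (hγ s hs).dist (hγ t ht)
    have l2 : Tendsto (fun n : ℕ => (t - s) + D / 2 ^ n) U (𝓝 ((t - s) + 0)) := by
      refine (Tendsto.add tendsto_const_nhds ?_).mono_left hUle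
      exact tendsto_const_nhds.div_atTop (tendsto_pow_atTop_atTop_of_one_lt (by norm_num))
    have := le_of_tendsto_of_tendsto' l1 l2 (fun n => hγle n s hs t ht hst)
    simpa using this
  have heq : ∀ s ∈ Set.Icc 0 D, ∀ t ∈ Set.Icc 0 D, s ≤ t → dist (γ s) (γ t) = t - s := by
    intro s hs t ht hst
    refine le_antisymm (hle s hs t ht hst) ?_
    have a1 := hle 0 ⟨le_rfl, hDpos.le⟩ s hs hs.1
    have a2 := hle t ht D ⟨hDpos.le, le_rfl⟩ ht.2
    rw [h0] at a1
    rw [h1] at a2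
    have := dist_triangle4 x (γ s) (γ t) y
    linarith
  refine ⟨γ, h0, h1, ?_⟩
  intro s hs t ht
  rcases le_total s t with h | h
  · rw [heq s hs t ht h, abs_sub_comm, abs_of_nonneg (by linarith)]
  · rw [dist_comm, heq t ht s hs h, abs_of_nonneg (by linarith)]

/-! ### Hankel Gram matrices and exponential sums -/

/-- Vectors `v 0, …, v (2m+1)` whose Gram matrix is a Hankel matrix behave, as far as their pairings
with `g` are concerned, like the orbit of `v 0` under a symmetric operator. The shift
`v i ↦ v (i + 1)`, compressed to the span of `v 0, …, v (2m)`, is well defined and symmetric, so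
diagonalising it writes the pairings as an exponential sum. Only even indices are used because the
eigenvalues may be negative; the exponents are `log (ev i ^ 2)`. Cauchy–Schwarz bounds the
absolute sum on the whole interval `[0, m]`, uniformly in `m` as soon as `N 0` and `N (4m)` are. -/
lemma exists_expSum_of_hankel {E : Type*} [NormedAddCommGroup E] [InnerProductSpace ℝ E]
    (m : ℕ) (v : ℕ → E) (N : ℕ → ℝ)
    (hv : ∀ i ≤ 2 * m + 1, ∀ j ≤ 2 * m + 1, inner ℝ (v i) (v j) = N (i + j)) (g : E) :
    ∃ (n : ℕ) (c l : Fin n → ℝ),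
      (∀ j : ℕ, 1 ≤ j → j ≤ m → ∑ i, c i * Real.exp (l i * j) = inner ℝ (v (2 * j)) g) ∧
      (∀ s : ℝ, 0 ≤ s → s ≤ m →
        ∑ i, |c i| * Real.exp (l i * s) ≤ √(N 0 + N (4 * m)) * ‖g‖) := by
  classical
  set A₀ : (Fin (2 * m + 1) → ℝ) →ₗ[ℝ] E :=
    Fintype.linearCombination ℝ (fun i : Fin (2 * m + 1) => v i) with hA₀
  set S₀ : (Fin (2 * m + 1) → ℝ) →ₗ[ℝ] E :=
    Fintype.linearCombination ℝ (fun i : Fin (2 * m + 1) => v (i + 1)) with hS₀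
  set V : Submodule ℝ E := LinearMap.range A₀ with hV
  set A : (Fin (2 * m + 1) → ℝ) →ₗ[ℝ] V := A₀.rangeRestrict with hA
  have hAsurj : Function.Surjective A := LinearMap.surjective_rangeRestrict _
  set B : (Fin (2 * m + 1) → ℝ) →ₗ[ℝ] V :=
    (V.orthogonalProjectionOnto : E →ₗ[ℝ] V) ∘ₗ S₀ with hB
  have hAcoe : ∀ c, (A c : E) = A₀ c := fun c => rfl
  have hproj : ∀ (u : E) (w : V), inner ℝ (V.orthogonalProjectionOnto u) w = inner ℝ u (w : E) := by
    intro u w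
    rw [real_inner_comm, Submodule.inner_orthogonalProjectionOnto_eq_of_mem_left, real_inner_comm]
  have hBA : ∀ c d, inner ℝ (B c) (A d) = inner ℝ (S₀ c) (A₀ d) := by
    intro c d
    exact hproj _ _
  have hSA : ∀ c d, inner ℝ (S₀ c) (A₀ d) = inner ℝ (A₀ c) (S₀ d) := by
    intro c d
    simp only [hA₀, hS₀, Fintype.linearCombination_apply, sum_inner, inner_sum,
      real_inner_smul_left, real_inner_smul_right]
    refine Finset.sum_congr rfl fun i _ => Finset.sum_congr rfl fun j _ => ?_
    rw [hv _ (by omega) _ (by omega), hv _ (by omega) _ (by omega)]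
    congr 3
    ring
  -- the compressed shift is well defined on the span, by symmetry of the Hankel matrix
  have hker : ∀ c, A c = 0 → B c = 0 := by
    intro c hc
    obtain ⟨d, hd⟩ := hAsurj (B c)
    have h1 : inner ℝ (B c) (A d) = 0 := by
      rw [hBA, hSA, ← hAcoe, hc]; simp
    rw [hd] at h1
    exact inner_self_eq_zero.mp h1
  obtain ⟨r, hr⟩ := A.exists_rightInverse_of_surjective (LinearMap.range_eq_top.mpr hAsurj)
  set T : V →ₗ[ℝ] V := B ∘ₗ r with hT
  have hTA : ∀ c, T (A c) = B c := by
    intro c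
    have h1 : A (r (A c)) = A c := by
      have := congrArg (fun f => f (A c)) hr
      simpa using this
    have h2 : B (r (A c) - c) = 0 := hker _ (by rw [map_sub, h1, sub_self])
    rw [map_sub, sub_eq_zero] at h2
    exact h2
  have hsym : T.IsSymmetric := by
    intro u w
    obtain ⟨c, rfl⟩ := hAsurj u
    obtain ⟨d, rfl⟩ := hAsurj w
    rw [hTA, hTA, hBA, hSA, real_inner_comm (B d), hBA, real_inner_comm]
  have hvA : ∀ i : Fin (2 * m + 1), A₀ (Pi.single i 1) = v i := by
    intro i; simp [hA₀]
  have hvS : ∀ i : Fin (2 * m + 1), S₀ (Pi.single i 1) = v (i + 1) := by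
    intro i; simp [hS₀]
  have hmem : ∀ i, i ≤ 2 * m → v i ∈ V := fun i hi =>
    ⟨Pi.single ⟨i, by omega⟩ 1, hvA ⟨i, by omega⟩⟩
  have hAv : ∀ i (hi : i ≤ 2 * m), A (Pi.single ⟨i, by omega⟩ 1) = ⟨v i, hmem i hi⟩ := by
    intro i hi
    exact Subtype.ext (hvA ⟨i, by omega⟩)
  have hTv : ∀ i (hi : i + 1 ≤ 2 * m), T ⟨v i, hmem i (by omega)⟩ = ⟨v (i + 1), hmem _ hi⟩ := by
    intro i hi
    rw [← hAv i (by omega), hTA]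
    change V.orthogonalProjectionOnto (S₀ _) = _
    rw [hvS]
    exact Submodule.orthogonalProjectionOnto_mem_subspace_eq_self (K := V) ⟨v (i + 1), hmem _ hi⟩
  set b := hsym.eigenvectorBasis rfl with hb
  set ev := hsym.eigenvalues rfl with hev
  have hbT : ∀ (u : V) i, inner ℝ (b i) (T u) = ev i * inner ℝ (b i) u := by
    intro u i
    rw [← hsym (b i) u, hsym.apply_eigenvectorBasis rfl i]
    simp [real_inner_smul_left, hev, hb]
  set a : Fin (Module.finrank ℝ V) → ℝ := fun i => inner ℝ (b i) ⟨v 0, hmem 0 (by omega)⟩ with ha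
  have hpow : ∀ j (hj : j ≤ 2 * m) i, inner ℝ (b i) ⟨v j, hmem j hj⟩ = ev i ^ j * a i := by
    intro j
    induction j with
    | zero => intro hj i; simp [ha]
    | succ k ih =>
      intro hj i
      rw [← hTv k hj, hbT, ih (by omega)]
      ring
  set g' : V := V.orthogonalProjectionOnto g with hg'
  have hnorm : ∀ j, j ≤ 2 * m → ∑ i, (ev i ^ j * a i) ^ 2 = N (j + j) := by
    intro j hj
    rw [← hv j (by omega) j (by omega)]
    have := b.sum_inner_mul_inner ⟨v j, hmem j hj⟩ ⟨v j, hmem j hj⟩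
    rw [Submodule.coe_inner] at this
    rw [← this]
    refine Finset.sum_congr rfl fun i _ => ?_
    rw [real_inner_comm, hpow j hj]
    ring
  -- zero eigenvalues contribute nothing to positive powers, so their coefficients are dropped
  refine ⟨Module.finrank ℝ V, fun i => if ev i = 0 then 0 else a i * inner ℝ (b i) g',
    fun i => Real.log (ev i ^ 2), ?_, ?_⟩
  · intro j hj1 hj
    have h1 : inner ℝ (v (2 * j)) g =
        inner ℝ (⟨v (2 * j), hmem _ (by omega)⟩ : V) g' := by
      rw [real_inner_comm, hg', real_inner_comm (V.orthogonalProjectionOnto g), hproj]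
    rw [h1, ← b.sum_inner_mul_inner]
    refine Finset.sum_congr rfl fun i _ => ?_
    rw [real_inner_comm, hpow _ (by omega)]
    by_cases h0 : ev i = 0
    · simp [h0, show j ≠ 0 by omega]
    · have : Real.exp (Real.log (ev i ^ 2) * j) = ev i ^ (2 * j) := by
        rw [mul_comm, Real.exp_nat_mul, Real.exp_log (by positivity), pow_mul]
      simp only [h0, if_false, this]
      ring
  · intro s hs0 hsm
    set β : Fin (Module.finrank ℝ V) → ℝ := fun i => inner ℝ (b i) g' with hβ
    set α : Fin (Module.finrank ℝ V) → ℝ := fun i =>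
      if ev i = 0 then 0 else |a i| * Real.exp (Real.log (ev i ^ 2) * s) with hα
    have hβsum : ∑ i, |β i| ^ 2 ≤ ‖g‖ ^ 2 := by
      have h1 : ∑ i, |β i| ^ 2 = ‖g'‖ ^ 2 := by
        rw [← b.sum_sq_norm_inner_right g']; rfl
      rw [h1]
      have : ‖g'‖ ≤ ‖g‖ := Submodule.norm_orthogonalProjectionOnto_apply_le V g
      gcongr
    have hαsum : ∑ i, α i ^ 2 ≤ N 0 + N (4 * m) := by
      have e0 := hnorm 0 (by omega)
      have e1 := hnorm (2 * m) le_rfl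
      rw [show 2 * m + 2 * m = 4 * m by ring] at e1
      rw [← e0, ← e1, ← Finset.sum_add_distrib]
      refine Finset.sum_le_sum fun i _ => ?_
      by_cases h0 : ev i = 0
      · simp only [hα, h0, if_true, zero_pow two_ne_zero]; positivity
      · simp only [hα, h0, if_false]
        have hp : Real.exp (Real.log (ev i ^ 2) * s) ^ 2 ≤ 1 + (ev i ^ (2 * m)) ^ 2 := by
          have e2 : ev i ^ (2 * m) = Real.exp (Real.log (ev i ^ 2) * m) := by
            rw [mul_comm _ (m : ℝ), Real.exp_nat_mul, Real.exp_log (by positivity), pow_mul]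
          rw [e2]
          rcases le_total 0 (Real.log (ev i ^ 2)) with h | h
          · have : Real.exp (Real.log (ev i ^ 2) * s) ≤ Real.exp (Real.log (ev i ^ 2) * m) := by
              gcongr
            nlinarith [Real.exp_pos (Real.log (ev i ^ 2) * s)]
          · have : Real.exp (Real.log (ev i ^ 2) * s) ≤ 1 := by
              rw [Real.exp_le_one_iff]; exact mul_nonpos_of_nonpos_of_nonneg h hs0
            nlinarith [Real.exp_pos (Real.log (ev i ^ 2) * s),
              sq_nonneg (Real.exp (Real.log (ev i ^ 2) * m))]
        rw [mul_pow, mul_pow, mul_pow, sq_abs]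
        nlinarith [mul_le_mul_of_nonneg_left hp (sq_nonneg (a i))]
    have hcs := Real.sum_mul_le_sqrt_mul_sqrt Finset.univ α (fun i => |β i|)
    calc _ = ∑ i, α i * |β i| := by
          refine Finset.sum_congr rfl fun i _ => ?_
          by_cases h0 : ev i = 0
          · simp [hα, h0]
          · simp only [hα, h0, if_false, abs_mul, hβ]; ring
      _ ≤ _ := hcs
      _ ≤ √(N 0 + N (4 * m)) * √(‖g‖ ^ 2) := by gcongr
      _ = _ := by rw [Real.sqrt_sq (norm_nonneg g)]

/-! ### Holomorphic extension and Phragmén–Lindelöf -/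

/-- A Montel-type statement: a uniformly bounded sequence of holomorphic functions is equicontinuous,
so its pointwise ultralimit is locally uniform, hence holomorphic. -/
lemma exists_holomorphic_ultralimit (F : ℕ → ℂ → ℂ) (U : Set ℂ) (hU : IsOpen U)
    (hF : ∀ k, DifferentiableOn ℂ (F k) U) (M : ℝ) (hM : ∀ k, ∀ z ∈ U, ‖F k z‖ ≤ M) :
    ∃ G : ℂ → ℂ, DifferentiableOn ℂ G U ∧ (∀ z ∈ U, ‖G z‖ ≤ M) ∧
      ∀ z ∈ U, ∀ w, (∀ᶠ k in atTop, F k z = w) → G z = w := by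
  set 𝒰 : Ultrafilter ℕ := hyperfilter ℕ with h𝒰
  have hle : (𝒰 : Filter ℕ) ≤ atTop := by
    rw [← Nat.cofinite_eq_atTop]; exact hyperfilter_le_cofinite
  have hex : ∀ z ∈ U, ∃ w, Tendsto (fun k => F k z) 𝒰 (𝓝 w) := by
    intro z hz
    have : (𝒰.map (fun k => F k z) : Filter ℂ) ≤ 𝓟 (closedBall 0 M) := by
      rw [le_principal_iff]
      refine Filter.Eventually.of_forall (f := (𝒰 : Filter ℕ)) fun k => ?_
      change F k z ∈ closedBall 0 M
      simpa using hM k z hz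
    obtain ⟨w, _, hw⟩ := (isCompact_closedBall (0 : ℂ) M).ultrafilter_le_nhds _ this
    exact ⟨w, hw⟩
  choose! G hG using hex
  refine ⟨G, ?_, fun z hz => ?_, fun z hz w hw => ?_⟩
  · have hequi : ∀ z ∈ U, EquicontinuousAt F z := by
      intro z hz
      obtain ⟨r, hr, hrU⟩ := Metric.isOpen_iff.mp hU z hz
      have hM0 : 0 ≤ M := (norm_nonneg _).trans (hM 0 z hz)
      refine Metric.equicontinuousAt_of_continuity_modulus
        (fun w => (2 * M + 1) / r * dist w z) ?_ F ?_
      · have : Continuous fun w : ℂ => (2 * M + 1) / r * dist w z := by fun_prop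
        simpa using this.tendsto z
      · filter_upwards [Metric.ball_mem_nhds z hr] with w hw k
        rw [dist_comm]
        refine Complex.dist_le_div_mul_dist_of_mapsTo_ball ((hF k).mono hrU) ?_ hw
        intro u hu
        rw [mem_closedBall, dist_eq_norm]
        have := norm_sub_le (F k u) (F k z)
        linarith [hM k u (hrU hu), hM k z hz]
    have hloc : TendstoLocallyUniformlyOn F G 𝒰 U := by
      rw [tendstoLocallyUniformlyOn_iff_forall_isCompact hU]
      intro K hKU hK
      have h := (EquicontinuousOn.tendsto_uniformOnFun_iff_pi' (F := F) (𝔖 := {K})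
        (by simpa using hK)
        (by
          intro K' hK'
          rw [Set.mem_singleton_iff] at hK'
          subst hK'
          intro z hz
          exact (hequi z (hKU hz)).equicontinuousWithinAt _) (𝒰 : Filter ℕ) G).mpr (by
          rw [tendsto_pi_nhds]
          rintro ⟨z, hz⟩
          have hz' : z ∈ K := by simpa using hz
          exact hG z (hKU hz'))
      rw [UniformOnFun.tendsto_iff_tendstoUniformlyOn] at h
      exact h K rfl
    exact hloc.differentiableOn (Eventually.of_forall hF) hU
  · exact le_of_tendsto (hG z hz).norm (Eventually.of_forall fun k => hM k z hz)
  · refine tendsto_nhds_unique (hG z hz) ?_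
    exact tendsto_const_nhds.congr' ((hw.filter_mono hle).mono fun k hk => hk.symm)

/-- A function `h` on `(0, t₁]` which, on every dyadic grid, coincides with an exponential sum
bounded by `M` extends (at dyadic points) to a holomorphic function bounded by `M` on the strip
`0 < re z < t₁`. If moreover `h s = O(exp (-a / s))` as `s → 0`, with an arbitrary constant, then
Phragmén–Lindelöf upgrades this to a bound whose constant depends on `M` and `t₁` only. -/
lemma abs_le_exp_of_expSum {t₁ a M : ℝ} (ht₁ : 0 < t₁) (ha : 0 ≤ a) (h : ℝ → ℝ)
    (hF : ∀ k : ℕ, ∃ (n : ℕ) (c l : Fin n → ℝ),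
      (∀ j : ℕ, 1 ≤ j → j ≤ 2 ^ k →
        ∑ i, c i * Real.exp (l i * j) = h (j * (t₁ / 2 ^ k))) ∧
      (∀ s : ℝ, 0 ≤ s → s ≤ 2 ^ k → ∑ i, |c i| * Real.exp (l i * s) ≤ M))
    (hsmall : ∃ C s₀ : ℝ, 0 < s₀ ∧ ∀ s, 0 < s → s < s₀ → |h s| ≤ C * Real.exp (-a / s))
    (k : ℕ) (hk : 1 ≤ k) :
    |h (t₁ / 2 ^ k)| ≤ M * Real.exp (-a * (2 ^ k / t₁ - 2 / t₁)) := by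
  choose n c l hval hbd using hF
  set F : ℕ → ℂ → ℂ := fun k z =>
    ∑ i, (c k i : ℂ) * Complex.exp ((l k i : ℂ) * (z * ((2 ^ k / t₁ : ℝ) : ℂ))) with hFdef
  set U : Set ℂ := {z | 0 < z.re ∧ z.re < t₁} with hUdef
  have hUo : IsOpen U :=
    (isOpen_lt continuous_const Complex.continuous_re).inter
      (isOpen_lt Complex.continuous_re continuous_const)
  have hFd : ∀ k, DifferentiableOn ℂ (F k) U := fun k => by
    have : Differentiable ℂ (F k) := by simp only [hFdef]; fun_prop
    exact this.differentiableOn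
  have hFM : ∀ k, ∀ z ∈ U, ‖F k z‖ ≤ M := by
    intro k z hz
    have h0 : 0 ≤ z.re * (2 ^ k / t₁) := mul_nonneg hz.1.le (by positivity)
    have h1 : z.re * (2 ^ k / t₁) ≤ 2 ^ k := by
      calc z.re * (2 ^ k / t₁) ≤ t₁ * (2 ^ k / t₁) := by gcongr; exact hz.2.le
        _ = 2 ^ k := by field_simp
    refine le_trans (norm_sum_le _ _) (le_trans (le_of_eq ?_) (hbd k _ h0 h1))
    refine Finset.sum_congr rfl fun i _ => ?_
    rw [norm_mul, Complex.norm_real, Complex.norm_exp, Real.norm_eq_abs,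
      Complex.re_ofReal_mul, Complex.re_mul_ofReal]
  obtain ⟨G, hGd, hGM, hGval⟩ := exists_holomorphic_ultralimit F U hUo hFd M hFM
  have hFval : ∀ k j : ℕ, 1 ≤ j → j ≤ 2 ^ k →
      F k ((j * (t₁ / 2 ^ k) : ℝ) : ℂ) = (h (j * (t₁ / 2 ^ k)) : ℂ) := by
    intro k j h1 h2
    rw [← hval k j h1 h2]
    simp only [hFdef]
    push_cast
    refine Finset.sum_congr rfl fun i _ => ?_
    congr 3
    have : (t₁ : ℂ) ≠ 0 := by exact_mod_cast ht₁.ne'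
    field_simp
  have hGh : ∀ k j : ℕ, 1 ≤ j → j < 2 ^ k →
      G ((j * (t₁ / 2 ^ k) : ℝ) : ℂ) = (h (j * (t₁ / 2 ^ k)) : ℂ) := by
    intro k j h1 h2
    have hj : (0 : ℝ) < j := by exact_mod_cast h1
    refine hGval _ ⟨?_, ?_⟩ _ ?_
    · rw [Complex.ofReal_re]; positivity
    · rw [Complex.ofReal_re]
      have : (j : ℝ) < 2 ^ k := by exact_mod_cast h2
      calc j * (t₁ / 2 ^ k) < 2 ^ k * (t₁ / 2 ^ k) := by gcongr
        _ = t₁ := by field_simp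
    · filter_upwards [eventually_ge_atTop k] with q hq
      obtain ⟨d, rfl⟩ := Nat.exists_eq_add_of_le hq
      have e : (j * (t₁ / 2 ^ k) : ℝ) = ((j * 2 ^ d : ℕ) : ℝ) * (t₁ / 2 ^ (k + d)) := by
        push_cast; rw [pow_add]; field_simp
      rw [e]
      refine hFval (k + d) (j * 2 ^ d) ?_ ?_
      · exact Nat.mul_pos h1 (by positivity)
      · rw [pow_add]; exact Nat.mul_le_mul_right _ h2.le
  obtain ⟨C, s₀, hs₀, hC⟩ := hsmall
  have hGreal : ∀ r : ℝ, 0 < r → r < s₀ → r < t₁ → ‖G r‖ ≤ C * Real.exp (-a / r) := by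
    intro r hr hrs hrt
    set rk : ℕ → ℝ := fun k => (⌊r / t₁ * 2 ^ k⌋₊ : ℝ) * (t₁ / 2 ^ k) with hrk
    have hlim : Tendsto rk atTop (𝓝 r) := by
      have h1 : Tendsto (fun k : ℕ => (⌊r / t₁ * (2 : ℝ) ^ k⌋₊ : ℝ) / 2 ^ k) atTop
          (𝓝 (r / t₁)) :=
        (tendsto_nat_floor_mul_div_atTop (by positivity)).comp
          (tendsto_pow_atTop_atTop_of_one_lt (by norm_num : (1 : ℝ) < 2))
      have h2 := h1.mul_const t₁
      rw [div_mul_cancel₀ _ ht₁.ne'] at h2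
      refine h2.congr fun k => ?_
      simp only [hrk]; ring
    have hrU : (r : ℂ) ∈ U := ⟨by simpa using hr, by simpa using hrt⟩
    have hGc : ContinuousAt G r := (hGd.differentiableAt (hUo.mem_nhds hrU)).continuousAt
    have l1 : Tendsto (fun k => ‖G (rk k : ℂ)‖) atTop (𝓝 ‖G r‖) :=
      (hGc.tendsto.comp ((Complex.continuous_ofReal.tendsto r).comp hlim)).norm
    have l2 : Tendsto (fun k => C * Real.exp (-a / rk k)) atTop (𝓝 (C * Real.exp (-a / r))) :=
      ((Real.continuous_exp.tendsto _).comp (tendsto_const_nhds.div hlim hr.ne')).const_mul C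
    refine le_of_tendsto_of_tendsto l1 l2 ?_
    filter_upwards [hlim.eventually (lt_mem_nhds hr), hlim.eventually (gt_mem_nhds hrs)]
      with k hk1 hk2
    have e1 : 1 ≤ ⌊r / t₁ * (2 : ℝ) ^ k⌋₊ := by
      by_contra hcon
      have : ⌊r / t₁ * (2 : ℝ) ^ k⌋₊ = 0 := by omega
      simp [hrk, this] at hk1
    have e2 : ⌊r / t₁ * (2 : ℝ) ^ k⌋₊ < 2 ^ k := by
      rw [Nat.floor_lt (by positivity)]
      push_cast
      have : r / t₁ < 1 := (div_lt_one ht₁).mpr hrt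
      nlinarith [show (0 : ℝ) < 2 ^ k by positivity]
    have := hGh k _ e1 e2
    change ‖G ((rk k : ℝ) : ℂ)‖ ≤ _
    rw [this, Complex.norm_real]
    exact hC _ hk1 hk2
  -- Phragmén–Lindelöf in the variable `w = 1 / z - 2 / t₁`
  set δ : ℝ := 2 / t₁ with hδ
  have hδ0 : 0 < δ := by positivity
  have hmaps : ∀ w : ℂ, 0 ≤ w.re → (w + δ)⁻¹ ∈ U := by
    intro w hw
    have hre : (w + δ).re = w.re + δ := by simp
    have hpos : 0 < (w + δ).re := by rw [hre]; positivity
    have hns : (w + δ).re * (w + δ).re ≤ Complex.normSq (w + δ) := by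
      rw [Complex.normSq_apply]; nlinarith [mul_self_nonneg (w + δ).im]
    have hns0 : 0 < Complex.normSq (w + δ) := lt_of_lt_of_le (by positivity) hns
    refine ⟨?_, ?_⟩
    · rw [Complex.inv_re]; positivity
    · rw [Complex.inv_re, div_lt_iff₀ hns0]
      have h3 : 2 ≤ t₁ * (w + δ).re := by
        rw [hre, mul_add, hδ, mul_div_cancel₀ _ ht₁.ne']
        nlinarith
      nlinarith
  have hne : ∀ w : ℂ, 0 ≤ w.re → w + δ ≠ 0 := by
    intro w hw h0
    have := congrArg Complex.re h0
    simp at this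
    linarith
  set H : ℂ → ℂ := fun w => G ((w + δ)⁻¹) * Complex.exp (a * w) with hH
  have hHd : ∀ w : ℂ, 0 ≤ w.re → DifferentiableAt ℂ H w := by
    intro w hw
    have h1 : DifferentiableAt ℂ G ((w + δ)⁻¹) :=
      hGd.differentiableAt (hUo.mem_nhds (hmaps w hw))
    have h2 : DifferentiableAt ℂ (fun w : ℂ => (w + δ)⁻¹) w :=
      (differentiableAt_id.add_const _).inv (hne w hw)
    exact (h1.comp w h2).mul (by fun_prop)
  have hHn : ∀ w : ℂ, 0 ≤ w.re → ‖H w‖ ≤ M * Real.exp (a * w.re) := by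
    intro w hw
    simp only [hH]
    rw [norm_mul, Complex.norm_exp, Complex.re_ofReal_mul]
    gcongr
    exact hGM _ (hmaps w hw)
  have hM0 : 0 ≤ M := (norm_nonneg _).trans (hGM _ (hmaps 0 (by simp)))
  have key : ∀ w : ℂ, 0 ≤ w.re → ‖H w‖ ≤ M := by
    intro w hw
    refine PhragmenLindelof.right_half_plane_of_bounded_on_real (f := H) ?_ ?_ ?_ ?_ hw
    · refine ⟨fun w hw => (hHd w (le_of_lt hw)).differentiableWithinAt, fun w hw => ?_⟩
      rw [Complex.closure_setOfPred_lt_re] at hw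
      exact (hHd w hw).continuousAt.continuousWithinAt
    · refine ⟨1, by norm_num, a, Asymptotics.IsBigO.of_bound M ?_⟩
      refine Filter.Eventually.filter_mono inf_le_right ?_
      rw [eventually_principal]
      intro w hw
      refine (hHn w (le_of_lt hw)).trans ?_
      rw [Real.rpow_one, Real.norm_eq_abs, Real.abs_exp]
      gcongr
      exact Complex.re_le_norm w
    · refine ⟨max C 0, ?_⟩
      rw [eventually_map]
      have hlim : Tendsto (fun x : ℝ => (x + δ)⁻¹) atTop (𝓝 0) :=
        tendsto_inv_atTop_zero.comp (tendsto_atTop_add_const_right _ _ tendsto_id)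
      filter_upwards [hlim.eventually (gt_mem_nhds hs₀), hlim.eventually (gt_mem_nhds ht₁),
        eventually_gt_atTop 0] with x hx1 hx2 hx0
      have e : ((x : ℂ) + δ)⁻¹ = (((x + δ)⁻¹ : ℝ) : ℂ) := by push_cast; rfl
      have h1 := hGreal (x + δ)⁻¹ (by positivity) hx1 hx2
      simp only [hH]
      rw [norm_mul, Complex.norm_exp, Complex.re_ofReal_mul, Complex.ofReal_re, e]
      calc _ ≤ C * Real.exp (-a / (x + δ)⁻¹) * Real.exp (a * x) := by gcongr
        _ ≤ max C 0 * Real.exp (-a / (x + δ)⁻¹) * Real.exp (a * x) := by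
          gcongr; exact le_max_left _ _
        _ = max C 0 * Real.exp (-(a * δ)) := by
          rw [mul_assoc, ← Real.exp_add]; congr 2; rw [div_inv_eq_mul]; ring
        _ ≤ max C 0 * 1 := by
          gcongr
          rw [Real.exp_le_one_iff]
          nlinarith
        _ = _ := mul_one _
    · intro x
      refine (hHn _ (by simp)).trans ?_
      simp
  have hx0 : (0 : ℝ) ≤ 2 ^ k / t₁ - δ := by
    rw [hδ, ← sub_div]
    refine div_nonneg ?_ ht₁.le
    have : (2 : ℝ) ^ 1 ≤ 2 ^ k := pow_le_pow_right₀ (by norm_num) hk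
    linarith
  have hfin := key ((2 ^ k / t₁ - δ : ℝ) : ℂ) (by rw [Complex.ofReal_re]; exact hx0)
  have hv := hGh k 1 le_rfl (Nat.one_lt_two_pow (by omega))
  rw [Nat.cast_one, one_mul] at hv
  simp only [hH] at hfin
  rw [norm_mul, Complex.norm_exp, Complex.re_ofReal_mul, Complex.ofReal_re,
    show (((2 ^ k / t₁ - δ : ℝ) : ℂ) + δ)⁻¹ = ((t₁ / 2 ^ k : ℝ) : ℂ) by
      rw [← Complex.ofReal_add, sub_add_cancel, ← Complex.ofReal_inv, inv_div], hv,
    Complex.norm_real, Real.norm_eq_abs] at hfin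
  rw [neg_mul, Real.exp_neg, ← div_eq_mul_inv, le_div_iff₀ (Real.exp_pos _)]
  exact hfin

/-! ### The kernel and its heat flow -/

set_option linter.unusedSectionVars false

section Kernel

variable {X : Type*} [MetricSpace X] [ProperSpace X] [MeasurableSpace X] [BorelSpace X]
  {μ : Measure X} {p : X → X → ℝ → ℝ}

/-- The logarithmic asymptotics in exponential form, uniformly on a product of compact sets. -/
lemma kernel_bounds (hpos : ∀ (x y : X) (t : ℝ), 0 < t → 0 < p x y t)
    (hlog : TendstoLocallyUniformly
      (fun (t : ℝ) (q : X × X) => -4 * t * Real.log (p q.1 q.2 t))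
      (fun q : X × X => dist q.1 q.2 ^ 2) (𝓝[>] (0 : ℝ)))
    {K₁ K₂ : Set X} (hK₁ : IsCompact K₁) (hK₂ : IsCompact K₂) {ε : ℝ} (hε : 0 < ε) :
    ∃ s₀ : ℝ, 0 < s₀ ∧ ∀ t, 0 < t → t < s₀ → ∀ x ∈ K₁, ∀ y ∈ K₂,
      Real.exp (-(dist x y ^ 2 + ε) * (1 / (4 * t))) ≤ p x y t ∧
      p x y t ≤ Real.exp (-(dist x y ^ 2 - ε) * (1 / (4 * t))) := by
  have h1 : TendstoUniformlyOn (fun (t : ℝ) (q : X × X) => -4 * t * Real.log (p q.1 q.2 t))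
      (fun q : X × X => dist q.1 q.2 ^ 2) (𝓝[>] (0 : ℝ)) (K₁ ×ˢ K₂) :=
    (tendstoLocallyUniformlyOn_iff_tendstoUniformlyOn_of_compact (hK₁.prod hK₂)).mp
      hlog.tendstoLocallyUniformlyOn
  rw [Metric.tendstoUniformlyOn_iff] at h1
  obtain ⟨s₀, hs₀, h2⟩ := mem_nhdsGT_iff_exists_Ioo_subset.mp (h1 ε hε)
  refine ⟨s₀, hs₀, fun t ht hts x hx y hy => ?_⟩
  have h3 := h2 ⟨ht, hts⟩ (x, y) ⟨hx, hy⟩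
  simp only [Real.dist_eq] at h3
  rw [abs_lt] at h3
  have hp := hpos x y t ht
  have hl : Real.log (p x y t) = (4 * t * Real.log (p x y t)) * (1 / (4 * t)) := by
    field_simp
  have ht' : 0 < 1 / (4 * t) := by positivity
  constructor
  · rw [← Real.le_log_iff_exp_le hp, hl]
    gcongr
    linarith [h3.1]
  · rw [← Real.log_le_iff_le_exp hp, hl]
    gcongr
    linarith [h3.2]

/-- The Chapman–Kolmogorov identity for lower Lebesgue integrals. The Bochner integrals are not junk:
a non-integrable integrand would give the value `0`, whereas the kernel is positive. -/
lemma lintegral_kernel_mul (hpos : ∀ (x y : X) (t : ℝ), 0 < t → 0 < p x y t)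
    (hCK : ∀ (x y : X) (s t : ℝ), 0 < s → 0 < t →
      (∫ z, p x z t * p z y s ∂μ) = p x y (t + s))
    (x y : X) {s t : ℝ} (hs : 0 < s) (ht : 0 < t) :
    ∫⁻ z, ENNReal.ofReal (p x z t) * ENNReal.ofReal (p z y s) ∂μ =
      ENNReal.ofReal (p x y (t + s)) := by
  have hne : (∫ z, p x z t * p z y s ∂μ) ≠ 0 := by
    rw [hCK x y s t hs ht]; exact (hpos x y _ (by positivity)).ne'
  have hintegrable : Integrable (fun z => p x z t * p z y s) μ := by
    by_contra h
    exact hne (integral_undef h)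
  rw [← hCK x y s t hs ht, ofReal_integral_eq_lintegral_ofReal hintegrable
    (Eventually.of_forall fun z => (mul_pos (hpos _ _ _ ht) (hpos _ _ _ hs)).le)]
  exact lintegral_congr fun z => (ENNReal.ofReal_mul (hpos _ _ _ ht).le).symm

/-- On a compact set `K ∋ x` the kernel `p x · t` is bounded below by a positive constant, while its
square has finite integral `p x x (2t)`; hence `μ K < ∞`. -/
lemma measure_compact_lt_top
    (hpos : ∀ (x y : X) (t : ℝ), 0 < t → 0 < p x y t)
    (hsymm : ∀ (x y : X) (t : ℝ), p x y t = p y x t)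
    (hCK : ∀ (x y : X) (s t : ℝ), 0 < s → 0 < t →
      (∫ z, p x z t * p z y s ∂μ) = p x y (t + s))
    (hlog : TendstoLocallyUniformly
      (fun (t : ℝ) (q : X × X) => -4 * t * Real.log (p q.1 q.2 t))
      (fun q : X × X => dist q.1 q.2 ^ 2) (𝓝[>] (0 : ℝ))) :
    IsFiniteMeasureOnCompacts μ := by
  refine ⟨fun K hK => ?_⟩
  rcases K.eq_empty_or_nonempty with rfl | ⟨x, hx⟩
  · simp
  obtain ⟨r, hr⟩ := hK.isBounded.subset_closedBall x
  obtain ⟨s₀, hs₀, hb⟩ := kernel_bounds hpos hlog (isCompact_singleton (x := x)) hK one_pos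
  set t := s₀ / 2 with ht
  have ht0 : 0 < t := by positivity
  set m := Real.exp (-(r ^ 2 + 1) * (1 / (4 * t))) with hm
  have hle : ∀ z ∈ K, m ≤ p x z t := by
    intro z hz
    refine le_trans ?_ (hb t ht0 (by linarith) x rfl z hz).1
    have h1 : dist x z ≤ r := by rw [dist_comm]; exact hr hz
    have : dist x z ^ 2 ≤ r ^ 2 := by gcongr
    simp only [hm]
    gcongr
  have h1 : ENNReal.ofReal m * ENNReal.ofReal m * μ K ≤ ENNReal.ofReal (p x x (t + t)) := by
    rw [← lintegral_kernel_mul hpos hCK x x ht0 ht0, ← setLIntegral_const]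
    refine le_trans (setLIntegral_mono' hK.measurableSet fun z hz => ?_)
      (setLIntegral_le_lintegral K _)
    rw [hsymm z x]
    gcongr <;> exact hle z hz
  have hm0 : ENNReal.ofReal m * ENNReal.ofReal m ≠ 0 := by
    have : 0 < m := Real.exp_pos _
    simp [this]
  by_contra hcon
  rw [not_lt, top_le_iff] at hcon
  rw [hcon, ENNReal.mul_top hm0] at h1
  exact absurd h1 (by simp)

/-- The heat flow of the indicator function of `B`, as an extended nonnegative function. -/
noncomputable def heatFlow (μ : Measure X) (p : X → X → ℝ → ℝ) (B : Set X) (t : ℝ) (z : X) :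
    ℝ≥0∞ :=
  ∫⁻ w in B, ENNReal.ofReal (p w z t) ∂μ

lemma measurable_slice (hmeas : Measurable (fun q : X × X × ℝ => p q.1 q.2.1 q.2.2)) (t : ℝ) :
    Measurable fun q : X × X => ENNReal.ofReal (p q.1 q.2 t) := by
  have h : Measurable fun q : X × X => ((q.1, q.2, t) : X × X × ℝ) := by fun_prop
  exact (hmeas.comp h).ennreal_ofReal

lemma measurable_heatFlow [SFinite μ]
    (hmeas : Measurable (fun q : X × X × ℝ => p q.1 q.2.1 q.2.2)) (B : Set X) (t : ℝ) :
    Measurable (heatFlow μ p B t) :=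
  (measurable_slice hmeas t).lintegral_prod_left'

lemma lintegral_kernel_mul_heatFlow [SFinite μ]
    (hmeas : Measurable (fun q : X × X × ℝ => p q.1 q.2.1 q.2.2))
    (hpos : ∀ (x y : X) (t : ℝ), 0 < t → 0 < p x y t)
    (hsymm : ∀ (x y : X) (t : ℝ), p x y t = p y x t)
    (hCK : ∀ (x y : X) (s t : ℝ), 0 < s → 0 < t →
      (∫ z, p x z t * p z y s ∂μ) = p x y (t + s))
    (B : Set X) (x : X) {s t : ℝ} (hs : 0 < s) (ht : 0 < t) :
    ∫⁻ z, ENNReal.ofReal (p x z t) * heatFlow μ p B s z ∂μ = heatFlow μ p B (t + s) x := by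
  have hsl := measurable_slice hmeas
  have m1 : ∀ r, Measurable fun z => ENNReal.ofReal (p x z r) := fun r =>
    (hsl r).comp measurable_prodMk_left
  have m2 : ∀ z r, Measurable fun w => ENNReal.ofReal (p w z r) := fun z r =>
    (hsl r).comp measurable_prodMk_right
  calc _ = ∫⁻ z, ∫⁻ w in B, ENNReal.ofReal (p x z t) * ENNReal.ofReal (p w z s) ∂μ ∂μ := by
        refine lintegral_congr fun z => ?_
        rw [heatFlow, lintegral_const_mul _ (m2 z s)]
    _ = ∫⁻ w in B, ∫⁻ z, ENNReal.ofReal (p x z t) * ENNReal.ofReal (p w z s) ∂μ ∂μ := by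
        refine lintegral_lintegral_swap (Measurable.aemeasurable ?_)
        exact ((m1 t).comp measurable_fst).mul ((hsl s).comp measurable_swap)
    _ = _ := by
        rw [heatFlow]
        refine lintegral_congr fun w => ?_
        rw [hsymm w x, ← lintegral_kernel_mul hpos hCK x w hs ht]
        refine lintegral_congr fun z => ?_
        rw [hsymm w z]

lemma lintegral_heatFlow_mul [SFinite μ]
    (hmeas : Measurable (fun q : X × X × ℝ => p q.1 q.2.1 q.2.2))
    (hpos : ∀ (x y : X) (t : ℝ), 0 < t → 0 < p x y t)
    (hsymm : ∀ (x y : X) (t : ℝ), p x y t = p y x t)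
    (hCK : ∀ (x y : X) (s t : ℝ), 0 < s → 0 < t →
      (∫ z, p x z t * p z y s ∂μ) = p x y (t + s))
    (B : Set X) {s t : ℝ} (hs : 0 < s) (ht : 0 < t) :
    ∫⁻ z, heatFlow μ p B t z * heatFlow μ p B s z ∂μ =
      ∫⁻ w in B, heatFlow μ p B (t + s) w ∂μ := by
  have hsl := measurable_slice hmeas
  have m2 : ∀ z r, Measurable fun w => ENNReal.ofReal (p w z r) := fun z r =>
    (hsl r).comp measurable_prodMk_right
  calc _ = ∫⁻ z, ∫⁻ w in B, ENNReal.ofReal (p w z t) * heatFlow μ p B s z ∂μ ∂μ := by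
        refine lintegral_congr fun z => ?_
        rw [lintegral_mul_const _ (m2 z t)]; rfl
    _ = ∫⁻ w in B, ∫⁻ z, ENNReal.ofReal (p w z t) * heatFlow μ p B s z ∂μ ∂μ := by
        refine lintegral_lintegral_swap (Measurable.aemeasurable ?_)
        exact ((hsl t).comp measurable_swap).mul
          ((measurable_heatFlow hmeas B s).comp measurable_fst)
    _ = _ := lintegral_congr fun w =>
        lintegral_kernel_mul_heatFlow hmeas hpos hsymm hCK B w hs ht

/-! ### Gaussian tail bound -/

lemma heatFlow_le {B : Set X} (hB : MeasurableSet B) {t c : ℝ} {z : X}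
    (h : ∀ w ∈ B, p w z t ≤ c) : heatFlow μ p B t z ≤ ENNReal.ofReal c * μ B := by
  rw [heatFlow, ← setLIntegral_const]
  exact setLIntegral_mono' hB fun w hw => ENNReal.ofReal_le_ofReal (h w hw)

lemma inner_toLp_toLp {f g : X → ℝ} (hf : MemLp f 2 μ) (hg : MemLp g 2 μ) :
    inner ℝ (hf.toLp f) (hg.toLp g) = ∫ z, f z * g z ∂μ := by
  rw [L2.inner_def]
  refine integral_congr_ae ?_
  filter_upwards [hf.coeFn_toLp, hg.coeFn_toLp] with z h1 h2
  rw [h1, h2, RCLike.inner_apply, RCLike.conj_to_real, mul_comm]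

/-- Gaussian tail bound for the heat flow of a small ball, with constants independent of the outer
radius `R'`. Pairing the flow with its own restriction `g` to the annulus gives a function of time
to which `abs_le_exp_of_expSum` applies: the Gram matrix of the flow at equally spaced times is
Hankel by Chapman–Kolmogorov and symmetry, and on the bounded annulus the assumed pointwise
asymptotics give a bound `O(exp (-a / s))` whose constant may depend on `R'`. -/
lemma heatFlow_tail [IsFiniteMeasureOnCompacts μ]
    (hmeas : Measurable (fun q : X × X × ℝ => p q.1 q.2.1 q.2.2))
    (hpos : ∀ (x y : X) (t : ℝ), 0 < t → 0 < p x y t)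
    (hsymm : ∀ (x y : X) (t : ℝ), p x y t = p y x t)
    (hCK : ∀ (x y : X) (s t : ℝ), 0 < s → 0 < t →
      (∫ z, p x z t * p z y s ∂μ) = p x y (t + s))
    (hlog : TendstoLocallyUniformly
      (fun (t : ℝ) (q : X × X) => -4 * t * Real.log (p q.1 q.2 t))
      (fun q : X × X => dist q.1 q.2 ^ 2) (𝓝[>] (0 : ℝ)))
    (y : X) {η R a : ℝ} (hηR : η ≤ R) (ha : 0 ≤ a) (haR : 4 * a < (R - η) ^ 2) :
    ∃ M t₁ : ℝ, 0 ≤ M ∧ 0 < t₁ ∧ ∀ k : ℕ, 1 ≤ k → ∀ R' : ℝ,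
      ∫⁻ z in closedBall y R' \ closedBall y R,
        heatFlow μ p (closedBall y η) (t₁ / 2 ^ k) z ^ 2 ∂μ ≤
        ENNReal.ofReal ((M * Real.exp (-a * (2 ^ k / t₁ - 2 / t₁))) ^ 2) := by
  set B := closedBall y η with hBdef
  have hBc : IsCompact B := isCompact_closedBall y η
  have hBm : MeasurableSet B := hBc.measurableSet
  have hBfin : μ B < ∞ := hBc.measure_lt_top
  obtain ⟨t₀, ht₀, hb⟩ := kernel_bounds hpos hlog hBc hBc one_pos
  set NN : ℝ → ℝ≥0∞ := fun t => ∫⁻ w in B, heatFlow μ p B t w ∂μ with hNN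
  have hNNfin : ∀ t, 0 < t → t < t₀ → NN t < ∞ := by
    intro t ht htt
    have h1 : NN t ≤ ENNReal.ofReal (Real.exp (1 * (1 / (4 * t)))) * μ B * μ B := by
      rw [← setLIntegral_const]
      refine setLIntegral_mono' hBm fun z hz => heatFlow_le hBm fun w hw => ?_
      refine (hb t ht htt w hw z hz).2.trans ?_
      gcongr
      nlinarith [sq_nonneg (dist w z)]
    refine lt_of_le_of_lt h1 ?_
    exact ENNReal.mul_lt_top (ENNReal.mul_lt_top ENNReal.ofReal_lt_top hBfin) hBfin
  have hSm : ∀ t, Measurable (heatFlow μ p B t) := measurable_heatFlow hmeas B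
  have hSm2 : ∀ s t, Measurable (fun z => heatFlow μ p B s z * heatFlow μ p B t z) :=
    fun s t => (hSm s).mul (hSm t)
  have hSS : ∀ s t, 0 < s → 0 < t →
      ∫⁻ z, heatFlow μ p B t z * heatFlow μ p B s z ∂μ = NN (t + s) := fun s t hs ht =>
    lintegral_heatFlow_mul hmeas hpos hsymm hCK B hs ht
  -- the flow, extended to time `0` by its initial value
  set w : ℝ → X → ℝ := fun t => if t = 0 then B.indicator 1 else
    fun z => (heatFlow μ p B t z).toReal with hw
  set N : ℝ → ℝ := fun t => if t = 0 then μ.real B else (NN t).toReal with hN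
  have hw0 : w 0 = B.indicator 1 := by simp [hw]
  have hwt : ∀ t, 0 < t → w t = fun z => (heatFlow μ p B t z).toReal := by
    intro t ht; simp [hw, ht.ne']
  have haefin : ∀ t, 0 < t → t < t₀ / 2 → ∀ᵐ z ∂μ, heatFlow μ p B t z < ∞ := by
    intro t ht htt
    have h1 : ∫⁻ z, heatFlow μ p B t z * heatFlow μ p B t z ∂μ ≠ ∞ := by
      rw [hSS t t ht ht]; exact (hNNfin _ (by linarith) (by linarith)).ne
    filter_upwards [ae_lt_top ((hSm t).mul (hSm t)) h1] with z hz
    by_contra hcon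
    rw [not_lt, top_le_iff] at hcon
    simp [hcon] at hz
  have hwmeas : ∀ t, 0 < t → AEStronglyMeasurable (w t) μ := by
    intro t ht; rw [hwt t ht]; exact (hSm t).ennreal_toReal.aestronglyMeasurable
  have hmem : ∀ t, 0 ≤ t → t < t₀ / 2 → MemLp (w t) 2 μ := by
    intro t ht htt
    rcases ht.eq_or_lt with rfl | ht
    · rw [hw0]
      exact memLp_indicator_const 2 hBm (1 : ℝ) (Or.inr hBfin.ne)
    · rw [memLp_two_iff_integrable_sq (hwmeas t ht), hwt t ht]
      have : (fun z => (heatFlow μ p B t z).toReal ^ 2) =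
          fun z => (heatFlow μ p B t z * heatFlow μ p B t z).toReal := by
        funext z; rw [ENNReal.toReal_mul, sq]
      rw [this]
      refine integrable_toReal_of_lintegral_ne_top ((hSm t).mul (hSm t)).aemeasurable ?_
      change ∫⁻ z, heatFlow μ p B t z * heatFlow μ p B t z ∂μ ≠ ∞
      rw [hSS t t ht ht]; exact (hNNfin _ (by linarith) (by linarith)).ne
  have hint0 : ∀ t, 0 < t → t < t₀ / 2 → ∫ z, w 0 z * w t z ∂μ = (NN t).toReal := by
    intro t ht htt
    have e : (fun z => w 0 z * w t z) = B.indicator fun z => (heatFlow μ p B t z).toReal := by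
      funext z
      rw [hw0, hwt t ht]
      by_cases hz : z ∈ B <;> simp [hz]
    rw [e, integral_indicator hBm, integral_toReal (hSm t).aemeasurable
      (ae_restrict_of_ae (haefin t ht htt))]
  have hinner : ∀ s t, 0 ≤ s → s < t₀ / 2 → 0 ≤ t → t < t₀ / 2 →
      ∫ z, w s z * w t z ∂μ = N (s + t) := by
    intro s t hs hst ht htt
    rcases hs.eq_or_lt with rfl | hs
    · rcases ht.eq_or_lt with rfl | ht
      · have e : (fun z => w 0 z * w 0 z) = B.indicator 1 := by
          funext z; rw [hw0]; by_cases hz : z ∈ B <;> simp [hz]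
        rw [e, integral_indicator_one hBm]
        simp [hN]
      · rw [hint0 t ht htt]; simp [hN, ht.ne']
    · rcases ht.eq_or_lt with rfl | ht
      · simp only [mul_comm (w s _)]
        rw [hint0 s hs hst]; simp [hN, hs.ne']
      · have hne : s + t ≠ 0 := by positivity
        simp only [hN, hne, if_false]
        rw [← hSS t s ht hs, ← integral_toReal (hSm2 s t).aemeasurable]
        · rw [hwt s hs, hwt t ht]
          simp [ENNReal.toReal_mul]
        · filter_upwards [haefin s hs hst, haefin t ht htt] with z h1 h2
          exact ENNReal.mul_lt_top h1 h2
  classical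
  set v : ℝ → Lp ℝ 2 μ := fun t => if h : MemLp (w t) 2 μ then h.toLp (w t) else 0 with hvdef
  have hv : ∀ t (h : MemLp (w t) 2 μ), v t = h.toLp (w t) := by
    intro t h; simp only [hvdef, h, dif_pos]
  set t₁ := t₀ / 4 with ht₁
  have ht₁0 : 0 < t₁ := by positivity
  set M := √(N 0 + N (2 * t₁)) with hM
  refine ⟨M, t₁, Real.sqrt_nonneg _, ht₁0, fun k hk R' => ?_⟩
  set A := closedBall y R' \ closedBall y R with hA
  have hAm : MeasurableSet A := measurableSet_closedBall.diff measurableSet_closedBall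
  have hAfin : μ A < ∞ :=
    lt_of_le_of_lt (measure_mono Set.sdiff_subset) (isCompact_closedBall y R').measure_lt_top
  set t := t₁ / 2 ^ k with ht
  have ht0 : 0 < t := by positivity
  have htt : t < t₀ / 2 := by
    have : t ≤ t₁ := div_le_self ht₁0.le (one_le_pow₀ (by norm_num))
    linarith
  have hgmem : MemLp (A.indicator (w t)) 2 μ := (hmem t ht0.le htt).indicator hAm
  set g : Lp ℝ 2 μ := hgmem.toLp _ with hg
  have hgint : Integrable (A.indicator (w t)) μ := by
    rw [integrable_indicator_iff hAm]
    have : IsFiniteMeasure (μ.restrict A) := ⟨by simpa using hAfin⟩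
    exact ((hmem t ht0.le htt).restrict A).integrable (by norm_num)
  have hdec := abs_le_exp_of_expSum (t₁ := t₁) (a := a) (M := M * ‖g‖) ht₁0 ha
    (fun s => inner ℝ (v s) g) ?_ ?_ k hk
  · have hgg : inner ℝ (v t) g = ‖g‖ ^ 2 := by
      rw [← real_inner_self_eq_norm_sq, hv t (hmem t ht0.le htt), hg, inner_toLp_toLp,
        inner_toLp_toLp]
      refine integral_congr_ae (Eventually.of_forall fun z => ?_)
      by_cases hz : z ∈ A <;> simp [hz]
    change |inner ℝ (v t) g| ≤ _ at hdec
    rw [hgg, abs_of_nonneg (by positivity)] at hdec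
    have hgle : ‖g‖ ≤ M * Real.exp (-a * (2 ^ k / t₁ - 2 / t₁)) := by
      rcases (norm_nonneg g).eq_or_lt with h0 | h0
      · rw [← h0]; exact mul_nonneg (Real.sqrt_nonneg _) (Real.exp_pos _).le
      · refine le_of_mul_le_mul_right ?_ h0
        nlinarith
    have hnorm : ‖g‖ ^ 2 = ∫ z in A, (heatFlow μ p B t z * heatFlow μ p B t z).toReal ∂μ := by
      rw [← real_inner_self_eq_norm_sq, hg, inner_toLp_toLp, ← integral_indicator hAm]
      refine integral_congr_ae (Eventually.of_forall fun z => ?_)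
      by_cases hz : z ∈ A <;> simp [hz, hwt t ht0]
    have hfinA : ∫⁻ z in A, heatFlow μ p B t z * heatFlow μ p B t z ∂μ ≠ ∞ := by
      refine (lt_of_le_of_lt (setLIntegral_le_lintegral A _) ?_).ne
      rw [hSS t t ht0 ht0]; exact hNNfin _ (by linarith) (by linarith)
    rw [integral_toReal (hSm2 t t).aemeasurable (ae_restrict_of_ae (by
      filter_upwards [haefin t ht0 htt] with z h1
      exact ENNReal.mul_lt_top h1 h1))] at hnorm
    simp only [sq (heatFlow μ p B t _)]
    change ∫⁻ z in A, heatFlow μ p B t z * heatFlow μ p B t z ∂μ ≤ _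
    rw [← ENNReal.ofReal_toReal hfinA]
    refine ENNReal.ofReal_le_ofReal ?_
    refine le_trans (le_of_eq hnorm.symm) ?_
    gcongr
  · intro k'
    set h : ℝ := t₁ / (2 * 2 ^ k') with hh
    have hh0 : 0 < h := by positivity
    have hrange : ∀ i : ℕ, i ≤ 2 * 2 ^ k' + 1 → (i : ℝ) * h < t₀ / 2 := by
      intro i hi
      have h1 : (i : ℝ) ≤ 2 * 2 ^ k' + 1 := by exact_mod_cast hi
      have h2 : (1 : ℝ) ≤ 2 ^ k' := one_le_pow₀ (by norm_num)
      have h3 : 2 ^ k' * h = t₁ / 2 := by rw [hh]; field_simp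
      nlinarith
    obtain ⟨n, c, l, h1, h2⟩ := exists_expSum_of_hankel (2 ^ k') (fun i : ℕ => v (i * h))
      (fun i : ℕ => N (i * h)) (by
        intro i hi j hj
        have hi0 : (0 : ℝ) ≤ i * h := by positivity
        have hj0 : (0 : ℝ) ≤ j * h := by positivity
        rw [hv _ (hmem _ hi0 (hrange i hi)), hv _ (hmem _ hj0 (hrange j hj)), inner_toLp_toLp,
          hinner _ _ hi0 (hrange i hi) hj0 (hrange j hj)]
        congr 1
        push_cast
        ring) g
    refine ⟨n, c, l, fun j hj1 hj2 => ?_, fun s hs1 hs2 => ?_⟩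
    · rw [h1 j hj1 hj2]
      congr 2
      rw [hh]; push_cast; field_simp
    · refine (h2 s hs1 (by push_cast; exact hs2)).trans (le_of_eq ?_)
      rw [hM]
      congr 3
      · simp
      · congr 1
        rw [hh]; push_cast; field_simp; norm_num
  · obtain ⟨s₀, hs₀, hb'⟩ := kernel_bounds hpos hlog hBc (isCompact_closedBall y R')
      (sub_pos.mpr haR)
    refine ⟨μ.real B * ∫ z, |A.indicator (w t) z| ∂μ, min s₀ (t₀ / 2), lt_min hs₀ (by positivity),
      fun s hs hss => ?_⟩
    have hs1 := hss.trans_le (min_le_left _ _)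
    have hs2 := hss.trans_le (min_le_right _ _)
    have hws : ∀ z ∈ A, w s z ≤ μ.real B * Real.exp (-a / s) := by
      intro z hz
      rw [hwt s hs]
      have h1 : heatFlow μ p B s z ≤ ENNReal.ofReal (Real.exp (-a / s)) * μ B := by
        refine heatFlow_le hBm fun u hu => ?_
        refine (hb' s hs hs1 u hu z hz.1).2.trans ?_
        have hd : R - η ≤ dist u z := by
          have h3 : R < dist z y := by
            have := hz.2
            rwa [mem_closedBall, not_le] at this
          have h4 : dist u y ≤ η := hu
          have := dist_triangle z u y
          rw [dist_comm z u] at this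
          linarith
        have hd2 : (R - η) ^ 2 ≤ dist u z ^ 2 := by
          have : 0 ≤ R - η := by linarith
          gcongr
        rw [show -a / s = -(4 * a) * (1 / (4 * s)) by field_simp]
        gcongr
        linarith
      have h2 := ENNReal.toReal_mono (ENNReal.mul_lt_top ENNReal.ofReal_lt_top hBfin).ne h1
      rw [ENNReal.toReal_mul, ENNReal.toReal_ofReal (Real.exp_pos _).le, mul_comm] at h2
      exact h2
    have hws0 : ∀ z, 0 ≤ w s z := by
      intro z; rw [hwt s hs]; exact ENNReal.toReal_nonneg
    rw [hv s (hmem s hs.le hs2), hg, inner_toLp_toLp, mul_right_comm, ← integral_const_mul]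
    rw [← Real.norm_eq_abs]
    refine norm_integral_le_of_norm_le (hgint.abs.const_mul _) (Eventually.of_forall fun z => ?_)
    rw [norm_mul, Real.norm_eq_abs, Real.norm_eq_abs, abs_of_nonneg (hws0 z)]
    by_cases hz : z ∈ A
    · exact mul_le_mul_of_nonneg_right (hws z hz) (abs_nonneg _)
    · simp [hz]

/-! ### Existence of midpoints -/

/-- Cauchy–Schwarz outside a ball: the square integral of `p x · t` is at most `p x x (2t)`, and the
square integral of `H` is the supremum of those over bounded annuli. -/
lemma lintegral_compl_closedBall_le [SFinite μ]
    (hmeas : Measurable (fun q : X × X × ℝ => p q.1 q.2.1 q.2.2))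
    (hpos : ∀ (x y : X) (t : ℝ), 0 < t → 0 < p x y t)
    (hsymm : ∀ (x y : X) (t : ℝ), p x y t = p y x t)
    (hCK : ∀ (x y : X) (s t : ℝ), 0 < s → 0 < t →
      (∫ z, p x z t * p z y s ∂μ) = p x y (t + s))
    (x y : X) {R t c : ℝ} (ht : 0 < t) (hc : 0 ≤ c) {H : X → ℝ≥0∞} (hH : Measurable H)
    (h : ∀ R' : ℝ, ∫⁻ z in closedBall y R' \ closedBall y R, H z ^ 2 ∂μ ≤
      ENNReal.ofReal (c ^ 2)) :
    ∫⁻ z in (closedBall y R)ᶜ, ENNReal.ofReal (p x z t) * H z ∂μ ≤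
      ENNReal.ofReal (√(p x x (t + t)) * c) := by
  have hU : (closedBall y R)ᶜ = ⋃ n : ℕ, closedBall y n \ closedBall y R := by
    rw [← iUnion_sdiff, iUnion_closedBall_nat, compl_eq_univ_sdiff]
  have h2 : ∫⁻ z in (closedBall y R)ᶜ, H z ^ 2 ∂μ ≤ ENNReal.ofReal (c ^ 2) := by
    rw [hU, setLIntegral_iUnion_of_directed]
    · exact iSup_le fun n => h n
    · refine Monotone.directed_le fun m n hmn => ?_
      exact sdiff_subset_sdiff_left (closedBall_subset_closedBall (by exact_mod_cast hmn))
  have hq : Measurable fun z => ENNReal.ofReal (p x z t) :=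
    (measurable_slice hmeas t).comp measurable_prodMk_left
  have h1 : ∫⁻ z in (closedBall y R)ᶜ, ENNReal.ofReal (p x z t) ^ 2 ∂μ ≤
      ENNReal.ofReal (p x x (t + t)) := by
    refine (setLIntegral_le_lintegral _ _).trans (le_of_eq ?_)
    rw [← lintegral_kernel_mul hpos hCK x x ht ht]
    refine lintegral_congr fun z => ?_
    rw [hsymm z x, sq]
  have hCS := ENNReal.lintegral_mul_le_Lp_mul_Lq (μ.restrict (closedBall y R)ᶜ)
    Real.HolderConjugate.two_two hq.aemeasurable hH.aemeasurable
  simp only [Pi.mul_apply, ENNReal.rpow_ofNat] at hCS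
  refine hCS.trans ?_
  have hp := (hpos x x (t + t) (by positivity)).le
  rw [ENNReal.ofReal_mul (Real.sqrt_nonneg _), Real.sqrt_eq_rpow,
    ← ENNReal.ofReal_rpow_of_nonneg hp (by norm_num)]
  refine mul_le_mul' (ENNReal.rpow_le_rpow h1 (by norm_num)) ?_
  refine (ENNReal.rpow_le_rpow h2 (by norm_num : (0 : ℝ) ≤ 1 / 2)).trans (le_of_eq ?_)
  rw [ENNReal.ofReal_rpow_of_nonneg (by positivity) (by norm_num), ← Real.sqrt_eq_rpow,
    Real.sqrt_sq hc]

set_option maxHeartbeats 1000000 in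
/-- If `y` lies in the support of `μ`, then every `x` has a midpoint with `y` in the support.
Otherwise compare exponential rates in `∫ p x z t * heatFlow z = heatFlow (2t) x`, where the flow
starts from a small ball around `y`: the right side decays like `exp (-D² / (8t))`, but the part of
the left side over a large ball decays strictly faster by the energy gap, and the part outside
does so by `heatFlow_tail`. -/
lemma exists_midpoint_mem_support [IsFiniteMeasureOnCompacts μ]
    (hmeas : Measurable (fun q : X × X × ℝ => p q.1 q.2.1 q.2.2))
    (hpos : ∀ (x y : X) (t : ℝ), 0 < t → 0 < p x y t)
    (hsymm : ∀ (x y : X) (t : ℝ), p x y t = p y x t)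
    (hCK : ∀ (x y : X) (s t : ℝ), 0 < s → 0 < t →
      (∫ z, p x z t * p z y s ∂μ) = p x y (t + s))
    (hlog : TendstoLocallyUniformly
      (fun (t : ℝ) (q : X × X) => -4 * t * Real.log (p q.1 q.2 t))
      (fun q : X × X => dist q.1 q.2 ^ 2) (𝓝[>] (0 : ℝ)))
    (x : X) {y : X} (hy : y ∈ μ.support) :
    ∃ m ∈ μ.support, dist x m = dist x y / 2 ∧ dist m y = dist x y / 2 := by
  by_contra hno
  set D := dist x y with hD
  have hD0 : 0 ≤ D := dist_nonneg
  set R := D + 4 with hR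
  set K := closedBall y R with hKdef
  have hKc : IsCompact K := isCompact_closedBall y R
  have hKm : MeasurableSet K := hKc.measurableSet
  have hKfin : μ K < ∞ := hKc.measure_lt_top
  -- without a midpoint in the support, the energy `d(x,z)² + d(z,y)²` has a gap there
  obtain ⟨ε₀, hε₀, hgap⟩ : ∃ ε₀ : ℝ, 0 < ε₀ ∧ ∀ z ∈ K, z ∈ μ.support →
      D ^ 2 / 2 + ε₀ ≤ dist x z ^ 2 + dist z y ^ 2 := by
    have hcomp : IsCompact (K ∩ μ.support) := hKc.inter_right Measure.isClosed_support
    have hcont : Continuous fun z => dist x z ^ 2 + dist z y ^ 2 := by fun_prop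
    obtain ⟨z₀, hz₀, hmin⟩ := hcomp.exists_isMinOn
      ⟨y, mem_closedBall_self (by positivity), hy⟩ hcont.continuousOn
    refine ⟨dist x z₀ ^ 2 + dist z₀ y ^ 2 - D ^ 2 / 2, ?_, fun z hz hz' => ?_⟩
    · by_contra hle
      have htri : D ≤ dist x z₀ + dist z₀ y := dist_triangle x z₀ y
      have h0 : (dist x z₀ - dist z₀ y) ^ 2 ≤ 0 := by nlinarith
      have h1 : dist x z₀ = dist z₀ y := by
        have := pow_eq_zero_iff (two_ne_zero) |>.mp (le_antisymm h0 (sq_nonneg _))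
        linarith
      have h2 : dist z₀ y = D / 2 := by
        rw [h1] at htri hle
        refine le_antisymm ?_ (by linarith)
        refine abs_le_of_sq_le_sq' (by linarith) (by positivity) |>.2
      exact hno ⟨z₀, hz₀.2, by rw [h1, h2], h2⟩
    · have := hmin ⟨hz, hz'⟩
      simp only [mem_ofPred_eq] at this
      linarith
  -- `η` serves both as radius of the initial ball and as error in the asymptotics; it is chosen so
  -- that all resulting errors in the exponent add up to at most `ε₀ / 2`
  set η := min 1 (ε₀ / (2 * (2 * R + D + 4))) with hη
  have hη0 : 0 < η := lt_min one_pos (by positivity)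
  have hη1 : η ≤ 1 := min_le_left _ _
  have hηε : η * (2 * R + D + 4) ≤ ε₀ / 2 := by
    have h1 : η ≤ ε₀ / (2 * (2 * R + D + 4)) := min_le_right _ _
    have h2 : 0 < 2 * (2 * R + D + 4) := by positivity
    rw [le_div_iff₀ h2] at h1
    linarith
  set B := closedBall y η with hBdef
  have hBc : IsCompact B := isCompact_closedBall y η
  have hBm : MeasurableSet B := hBc.measurableSet
  have hBfin : μ B < ∞ := hBc.measure_lt_top
  have hB0 : 0 < μ.real B :=
    ENNReal.toReal_pos ((Measure.mem_support_iff_forall y).mp hy B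
      (closedBall_mem_nhds y hη0)).ne' hBfin.ne
  -- `4a = (D + 2)²` lies strictly between the rate `E + 1` needed below and `(R - η)²`
  set a := (D + 2) ^ 2 / 4 with ha
  obtain ⟨M, t₁, hM, ht₁, htail⟩ := heatFlow_tail hmeas hpos hsymm hCK hlog y (η := η) (R := R)
    (a := a) (by linarith) (by positivity) (by rw [ha, hR]; nlinarith)
  obtain ⟨s₁, hs₁, hb1⟩ := kernel_bounds hpos hlog hBc (isCompact_singleton (x := x)) hη0
  obtain ⟨s₂, hs₂, hb2⟩ := kernel_bounds hpos hlog (isCompact_singleton (x := x)) hKc hη0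
  obtain ⟨s₃, hs₃, hb3⟩ := kernel_bounds hpos hlog hBc hKc hη0
  obtain ⟨s₄, hs₄, hb4⟩ := kernel_bounds hpos hlog (isCompact_singleton (x := x))
    (isCompact_singleton (x := x)) hη0
  set C := M * Real.exp (2 * a / t₁) with hC
  have key : ∀ k : ℕ, 1 ≤ k → 2 * (t₁ / 2 ^ k) < min (min s₁ s₂) (min s₃ s₄) →
      μ.real B ≤ μ.real B * μ.real K * Real.exp (-(ε₀ / 2) * (1 / (4 * (t₁ / 2 ^ k)))) +
        C * Real.exp (-1 * (1 / (4 * (t₁ / 2 ^ k)))) := by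
    intro k hk hsmall
    set t := t₁ / 2 ^ k with ht
    have ht0 : 0 < t := by positivity
    simp only [lt_min_iff] at hsmall
    obtain ⟨⟨ht1, ht2⟩, ht3, ht4⟩ := hsmall
    set L := 1 / (4 * t) with hL
    have hL0 : 0 < L := by positivity
    have hL2 : 1 / (4 * (t + t)) = L / 2 := by rw [hL]; field_simp; norm_num
    -- the right side is at least `exp (-E L)`, up to the factor `μ B`, where `L = 1 / (4t)`
    set E := ((D + η) ^ 2 + η) / 2 with hE
    have hlow : ENNReal.ofReal (Real.exp (-E * L)) * μ B ≤ heatFlow μ p B (t + t) x := by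
      rw [heatFlow, ← setLIntegral_const]
      refine setLIntegral_mono' hBm fun u hu => ENNReal.ofReal_le_ofReal ?_
      refine le_trans ?_ (hb1 (t + t) (by positivity) (by linarith) u hu x rfl).1
      rw [hL2]
      have hd : dist u x ≤ D + η := by
        have h1 : dist u y ≤ η := hu
        have := dist_triangle u y x
        rw [dist_comm y x] at this
        linarith
      have hd2 : dist u x ^ 2 ≤ (D + η) ^ 2 := by gcongr
      refine Real.exp_le_exp.mpr ?_
      rw [hE]
      nlinarith
    have hnear : ∫⁻ z in K, ENNReal.ofReal (p x z t) * heatFlow μ p B t z ∂μ ≤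
        ENNReal.ofReal (Real.exp (-(E + ε₀ / 2) * L)) * μ B * μ K := by
      rw [← setLIntegral_const]
      refine setLIntegral_mono_ae' hKm ?_
      filter_upwards [Measure.support_mem_ae (μ := μ)] with z hz hzK
      have hzR : dist z y ≤ R := hzK
      have h1 : heatFlow μ p B t z ≤
          ENNReal.ofReal (Real.exp (-(dist z y ^ 2 - 2 * R * η - η) * L)) * μ B := by
        refine heatFlow_le hBm fun u hu => ?_
        refine (hb3 t ht0 (by linarith) u hu z hzK).2.trans ?_
        have hu' : dist u y ≤ η := hu
        have h3 : dist z y ≤ dist u z + η := by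
          have := dist_triangle z u y
          rw [dist_comm z u] at this
          linarith
        have h4 : dist z y ^ 2 - 2 * R * η ≤ dist u z ^ 2 := by
          have hzy : 0 ≤ dist z y := dist_nonneg
          have huz : 0 ≤ dist u z := dist_nonneg
          rcases le_total (dist z y) (dist u z) with h | h
          · have : dist z y ^ 2 ≤ dist u z ^ 2 := by gcongr
            have : 0 ≤ R * η := by positivity
            linarith
          · nlinarith
        refine Real.exp_le_exp.mpr ?_
        nlinarith
      have h2 : p x z t ≤ Real.exp (-(dist x z ^ 2 - η) * L) :=
        (hb2 t ht0 (by linarith) x rfl z hzK).2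
      refine (mul_le_mul' (ENNReal.ofReal_le_ofReal h2) h1).trans ?_
      rw [← mul_assoc, ← ENNReal.ofReal_mul (Real.exp_pos _).le, ← Real.exp_add]
      refine mul_le_mul' (ENNReal.ofReal_le_ofReal (Real.exp_le_exp.mpr ?_)) le_rfl
      rw [← add_mul]
      refine mul_le_mul_of_nonneg_right ?_ hL0.le
      have := hgap z hzK hz
      rw [hE]
      nlinarith
    have hfar : ∫⁻ z in Kᶜ, ENNReal.ofReal (p x z t) * heatFlow μ p B t z ∂μ ≤
        ENNReal.ofReal (C * Real.exp (-(E + 1) * L)) := by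
      refine (lintegral_compl_closedBall_le hmeas hpos hsymm hCK x y ht0
        (mul_nonneg hM (Real.exp_pos _).le) (measurable_heatFlow hmeas B t)
        (htail k hk)).trans (ENNReal.ofReal_le_ofReal ?_)
      have h1 : √(p x x (t + t)) ≤ Real.exp (η * L / 4) := by
        rw [Real.sqrt_le_left (Real.exp_pos _).le, ← Real.exp_nat_mul]
        refine (hb4 (t + t) (by positivity) (by linarith) x rfl x rfl).2.trans ?_
        rw [hL2, dist_self]
        refine Real.exp_le_exp.mpr (le_of_eq ?_)
        push_cast
        ring
      have h2 : -a * (2 ^ k / t₁ - 2 / t₁) = 2 * a / t₁ - 4 * a * L := by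
        rw [hL, ht]; field_simp; ring
      rw [h2, sub_eq_add_neg, Real.exp_add, hC]
      calc √(p x x (t + t)) * (M * (Real.exp (2 * a / t₁) * Real.exp (-(4 * a * L))))
          ≤ Real.exp (η * L / 4) * (M * (Real.exp (2 * a / t₁) * Real.exp (-(4 * a * L)))) := by
            gcongr
        _ = M * Real.exp (2 * a / t₁) * Real.exp (η * L / 4 + -(4 * a * L)) := by
            rw [Real.exp_add]; ring
        _ ≤ _ := by
            gcongr
            have : E + 1 ≤ 4 * a - η / 4 := by rw [hE, ha]; nlinarith
            nlinarith
    have hsum : ENNReal.ofReal (Real.exp (-E * L)) * μ B ≤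
        ENNReal.ofReal (Real.exp (-(E + ε₀ / 2) * L)) * μ B * μ K +
          ENNReal.ofReal (C * Real.exp (-(E + 1) * L)) := by
      refine hlow.trans ?_
      rw [← lintegral_kernel_mul_heatFlow hmeas hpos hsymm hCK B x ht0 ht0,
        ← lintegral_add_compl _ hKm]
      exact add_le_add hnear hfar
    have hC0 : 0 ≤ C := mul_nonneg hM (Real.exp_pos _).le
    have hreal : Real.exp (-E * L) * μ.real B ≤
        Real.exp (-(E + ε₀ / 2) * L) * μ.real B * μ.real K + C * Real.exp (-(E + 1) * L) := by
      rw [← ofReal_measureReal hBfin.ne, ← ofReal_measureReal hKfin.ne,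
        ← ENNReal.ofReal_mul (by positivity), ← ENNReal.ofReal_mul (by positivity),
        ← ENNReal.ofReal_mul (by positivity), ← ENNReal.ofReal_add (by positivity)
        (by positivity)] at hsum
      exact (ENNReal.ofReal_le_ofReal_iff (by positivity)).mp hsum
    have e1 : Real.exp (-(E + ε₀ / 2) * L) = Real.exp (-E * L) * Real.exp (-(ε₀ / 2) * L) := by
      rw [← Real.exp_add]; ring_nf
    have e2 : Real.exp (-(E + 1) * L) = Real.exp (-E * L) * Real.exp (-1 * L) := by
      rw [← Real.exp_add]; ring_nf
    rw [e1, e2] at hreal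
    refine le_of_mul_le_mul_left (hreal.trans (le_of_eq ?_)) (Real.exp_pos (-E * L))
    ring
  have htend : Tendsto (fun k : ℕ => t₁ / 2 ^ k) atTop (𝓝 0) := by
    have := (tendsto_pow_atTop_nhds_zero_of_lt_one (r := (1 / 2 : ℝ)) (by norm_num)
      (by norm_num)).const_mul t₁
    simpa [div_eq_mul_inv] using this
  have hLtop : Tendsto (fun k : ℕ => 1 / (4 * (t₁ / 2 ^ k))) atTop atTop := by
    have h1 : Tendsto (fun k : ℕ => (2 : ℝ) ^ k * (1 / (4 * t₁))) atTop atTop :=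
      (tendsto_pow_atTop_atTop_of_one_lt (by norm_num)).atTop_mul_const (by positivity)
    refine h1.congr fun k => ?_
    field_simp
  have hexp : ∀ c : ℝ, 0 < c →
      Tendsto (fun k : ℕ => Real.exp (-c * (1 / (4 * (t₁ / 2 ^ k))))) atTop (𝓝 0) := fun c hc =>
    Real.tendsto_exp_atBot.comp (hLtop.const_mul_atTop_of_neg (neg_lt_zero.mpr hc))
  have hlim := ((hexp (ε₀ / 2) (by positivity)).const_mul (μ.real B * μ.real K)).add
    ((hexp 1 one_pos).const_mul C)
  rw [mul_zero, mul_zero, add_zero] at hlim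
  have hev : ∀ᶠ k : ℕ in atTop, 2 * (t₁ / 2 ^ k) < min (min s₁ s₂) (min s₃ s₄) := by
    have := htend.const_mul 2
    rw [mul_zero] at this
    exact this.eventually_lt_const (lt_min (lt_min hs₁ hs₂) (lt_min hs₃ hs₄))
  refine absurd (ge_of_tendsto hlim ?_) (not_le.mpr hB0)
  filter_upwards [hev, eventually_ge_atTop 1] with k h1 h2
  exact key k h2 h1

end Kernel

/-- **Geodesicity from short-time logarithmic heat kernel asymptotics.** Let `(X,d)` be a
complete proper metric space with a Borel measure `μ` carrying a positive symmetric
kernel `p` satisfying the Chapman–Kolmogorov identity, and suppose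
`−4t log p(x,y,t) → d(x,y)²` as `t → 0⁺`, locally uniformly in `(x,y)`. Then `(X,d)` is a
geodesic space; in particular any two points admit a midpoint. -/
theorem geodesic_of_log_heat_kernel_asymptotics
    {X : Type*} [MetricSpace X] [CompleteSpace X] [ProperSpace X]
    [MeasurableSpace X] [BorelSpace X]
    (μ : Measure X) (p : X → X → ℝ → ℝ)
    (hmeas : Measurable (fun q : X × X × ℝ => p q.1 q.2.1 q.2.2))
    (hpos : ∀ (x y : X) (t : ℝ), 0 < t → 0 < p x y t)
    (hsymm : ∀ (x y : X) (t : ℝ), p x y t = p y x t)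
    (hCK : ∀ (x y : X) (s t : ℝ), 0 < s → 0 < t →
      (∫ z, p x z t * p z y s ∂μ) = p x y (t + s))
    (hlog : TendstoLocallyUniformly
      (fun (t : ℝ) (q : X × X) => -4 * t * Real.log (p q.1 q.2 t))
      (fun q : X × X => dist q.1 q.2 ^ 2) (𝓝[>] (0 : ℝ))) :
    (∀ x y : X, ∃ m : X,
        dist x m = dist x y / 2 ∧ dist m y = dist x y / 2) ∧
    (∀ x y : X, ∃ γ : ℝ → X, γ 0 = x ∧ γ (dist x y) = y ∧
        ∀ s ∈ Set.Icc (0 : ℝ) (dist x y), ∀ t ∈ Set.Icc (0 : ℝ) (dist x y),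
          dist (γ s) (γ t) = |s - t|) := by
  have hfin : IsFiniteMeasureOnCompacts μ := measure_compact_lt_top hpos hsymm hCK hlog
  have hsupp : ∀ x : X, x ∈ μ.support := by
    intro x
    have hμ : μ ≠ 0 := by
      rintro rfl
      have h1 := hCK x x 1 1 one_pos one_pos
      rw [integral_zero_measure] at h1
      exact (hpos x x (1 + 1) (by norm_num)).ne h1
    obtain ⟨y, hy, hxy⟩ := Measure.isClosed_support.exists_infDist_eq_dist
      (Measure.nonempty_support hμ) x
    -- a midpoint of `x` and its nearest support point `y` would be nearer still, unless `x = y`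
    obtain ⟨m, hm, hxm, -⟩ := exists_midpoint_mem_support hmeas hpos hsymm hCK hlog x hy
    have h1 := infDist_le_dist_of_mem (x := x) hm
    have h2 : dist x y = 0 := le_antisymm (by linarith) dist_nonneg
    rwa [dist_eq_zero.mp h2]
  have hmid : ∀ x y : X, ∃ m : X, dist x m = dist x y / 2 ∧ dist m y = dist x y / 2 := by
    intro x y
    obtain ⟨m, -, hm⟩ := exists_midpoint_mem_support hmeas hpos hsymm hCK hlog x (hsupp y)
    exact ⟨m, hm⟩
  exact ⟨hmid, fun x y => exists_geodesic_of_midpoints hmid x y⟩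
end

section
/- Let α > 0 and let (X,d,μ) be a metric measure space with an α-dimensional volume. There exists a constant C₁ > 0 depending only on α such that for every Lipschitz function f : X → ℝ with Lipschitz constant Lip(f), every nonnegative continuous compactly supported function φ on X, and every t > 0: (1/(2t)) ∬_{X×X} φ(x) (f(x) − f(y))² (4πt)^{−α/2} exp(−d(x,y)²/(4t)) dμ(x) dμ(y) ≤ C₁ · Lip(f)² · ∫_X φ dμ. -/
/-!
Fix `x` and slice `X` into the shells `n ≤ d(x,y) / (2√t) < n + 1`. On the `n`-th shell the
Lipschitz bound gives `(f x - f y)² ≤ K² · 4t (n+1)²`, the exponential is at most `exp (-n²)`, and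
the shell lies in the ball of radius `2√t (n+1)`, whose measure is `ω_α (4t)^{α/2} (n+1)^α`. The
powers of `t` cancel against the Gaussian normalisation up to a single factor `t`, so the inner
integral is at most `φ x · K² · 4t / Γ(α/2+1) · S` with `S = ∑ (n+1)^{α+2} exp (-n²)`, which depends
only on `α` (`gaussian_shell_summable`, `gaussian_second_moment_le`). Integrating in `x` finishes
the proof, with `C₁ = 2 S / Γ(α/2+1)`.
-/

open MeasureTheory Metric Real Set Filter
open scoped ENNReal NNReal Topology

lemma gaussian_shell_summable (α : ℝ) :
    Summable (fun n : ℕ => ((n : ℝ) + 1) ^ (α + 2) * Real.exp (-(n : ℝ) ^ 2)) := by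
  obtain ⟨M, hM⟩ := exists_nat_ge (α + 2)
  have h1 := (summable_nat_add_iff 1).2 (Real.summable_pow_mul_exp_neg_nat_mul M one_pos)
  refine Summable.of_nonneg_of_le (fun n => by positivity) (fun n => ?_)
    (h1.mul_left (Real.exp 1))
  have hn : (0 : ℝ) ≤ n := Nat.cast_nonneg n
  have hsq : (n : ℝ) ≤ (n : ℝ) ^ 2 := by
    exact_mod_cast Nat.le_self_pow two_ne_zero n
  have ha : ((n : ℝ) + 1) ^ (α + 2) ≤ ((n : ℝ) + 1) ^ M := by
    rw [← Real.rpow_natCast]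
    exact Real.rpow_le_rpow_of_exponent_le (by linarith) hM
  have hb : Real.exp (-(n : ℝ) ^ 2) ≤ Real.exp 1 * Real.exp (-1 * ((n + 1 : ℕ) : ℝ)) := by
    rw [← Real.exp_add]
    apply Real.exp_le_exp.2
    push_cast
    linarith
  calc _ ≤ ((n : ℝ) + 1) ^ M * (Real.exp 1 * Real.exp (-1 * ((n + 1 : ℕ) : ℝ))) := by gcongr
    _ = _ := by push_cast; ring

/-- The second moment of the `α`-dimensional Gaussian kernel is at most a constant times `t`,
by summing over the shells `n ≤ d(x,y) / (2√t) < n + 1`. -/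
lemma gaussian_second_moment_le {α : ℝ} {X : Type*} [MetricSpace X] [MeasurableSpace X]
    [BorelSpace X] {μ : Measure X} (hα : 0 < α)
    (hμ : ∀ (x : X) (r : ℝ), 0 < r →
      μ (Metric.ball x r) = ENNReal.ofReal (π ^ (α / 2) / Real.Gamma (α / 2 + 1) * r ^ α))
    (x : X) {t : ℝ} (ht : 0 < t) :
    ∫⁻ y, ENNReal.ofReal (dist x y ^ 2 *
        ((4 * π * t) ^ (-(α / 2)) * Real.exp (-(dist x y) ^ 2 / (4 * t)))) ∂μ
      ≤ ENNReal.ofReal (4 * t / Real.Gamma (α / 2 + 1) *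
          ∑' n : ℕ, ((n : ℝ) + 1) ^ (α + 2) * Real.exp (-(n : ℝ) ^ 2)) := by
  have hΓ : 0 < Real.Gamma (α / 2 + 1) := Real.Gamma_pos_of_pos (by positivity)
  set s : ℝ := 2 * √t with hs
  have hs0 : 0 < s := by positivity
  have hs2 : s ^ 2 = 4 * t := by rw [hs, mul_pow, Real.sq_sqrt ht.le]; norm_num
  set c : ℝ := (4 * π * t) ^ (-(α / 2)) with hc
  have hc0 : 0 < c := by positivity
  -- `a n` bounds the integrand on the `n`-th shell
  set a : ℕ → ℝ := fun n => (s * (n + 1)) ^ 2 * (c * Real.exp (-(n : ℝ) ^ 2)) with ha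
  have hpt : ∀ y, ENNReal.ofReal (dist x y ^ 2 * (c * Real.exp (-(dist x y) ^ 2 / (4 * t))))
      ≤ ∑' n : ℕ, (Metric.ball x (s * (n + 1))).indicator
          (fun _ => ENNReal.ofReal (a n)) y := by
    intro y
    set n := ⌊dist x y / s⌋₊
    have h1 : (n : ℝ) * s ≤ dist x y :=
      (le_div_iff₀ hs0).1 (Nat.floor_le (by positivity))
    have h2 : dist x y < s * (n + 1) := by
      rw [mul_comm]; exact (div_lt_iff₀ hs0).1 (Nat.lt_floor_add_one _)
    refine le_trans ?_ (ENNReal.le_tsum n)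
    rw [Set.indicator_of_mem (by rwa [Metric.mem_ball, dist_comm])]
    apply ENNReal.ofReal_le_ofReal
    have h3 : (n : ℝ) ^ 2 ≤ dist x y ^ 2 / (4 * t) := by
      rw [le_div_iff₀ (by positivity), ← hs2, ← mul_pow]
      gcongr
    have h4 : Real.exp (-(dist x y) ^ 2 / (4 * t)) ≤ Real.exp (-(n : ℝ) ^ 2) := by
      apply Real.exp_le_exp.2
      rw [neg_div]; linarith
    simp only [ha]
    gcongr
  -- the Gaussian normalisation cancels the volume of the ball of radius `s`, up to `Γ(α/2+1)`
  have hscale : c * s ^ α * π ^ (α / 2) = 1 := by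
    have : s ^ α = (4 * t) ^ (α / 2) := by
      rw [← hs2, ← Real.rpow_natCast, ← Real.rpow_mul hs0.le]
      congr 1; push_cast; ring
    rw [this, mul_assoc, ← Real.mul_rpow (by positivity) (by positivity),
      show 4 * t * π = 4 * π * t by ring, hc, ← Real.rpow_add (by positivity)]
    simp
  calc _ ≤ ∫⁻ y, ∑' n : ℕ, (Metric.ball x (s * (n + 1))).indicator
          (fun _ => ENNReal.ofReal (a n)) y ∂μ := lintegral_mono hpt
    _ = ∑' n : ℕ, ENNReal.ofReal (4 * t / Real.Gamma (α / 2 + 1) *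
          (((n : ℝ) + 1) ^ (α + 2) * Real.exp (-(n : ℝ) ^ 2))) := by
        rw [lintegral_tsum
          (fun n => (measurable_const.indicator measurableSet_ball).aemeasurable)]
        congr 1; ext n
        have hn : (0 : ℝ) < (n : ℝ) + 1 := by positivity
        rw [lintegral_indicator_const measurableSet_ball, hμ x _ (by positivity),
          ← ENNReal.ofReal_mul (by positivity)]
        congr 1
        rw [Real.mul_rpow hs0.le hn.le, Real.rpow_add hn, Real.rpow_two]
        simp only [ha]
        rw [mul_pow, hs2]
        linear_combination (4 * t / Real.Gamma (α / 2 + 1) * ((n : ℝ) + 1) ^ 2 *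
          ((n : ℝ) + 1) ^ α * Real.exp (-(n : ℝ) ^ 2)) * hscale
    _ = _ := by
        rw [← tsum_mul_left, ENNReal.ofReal_tsum_of_nonneg (fun n => by positivity)
          ((gaussian_shell_summable α).mul_left _)]

/-- **Uniform energy bound for Lipschitz functions.** For `α > 0` there is a constant
`C₁ > 0` depending only on `α` such that on any metric measure space with
`α`-dimensional volume, for any `K`-Lipschitz `f`, any nonnegative continuous compactly
supported `φ` and any `t > 0`:
`(1/(2t)) ∬ φ(x) (f(x)−f(y))² (4πt)^{−α/2} e^{−d(x,y)²/(4t)} dμ(x) dμ(y) ≤ C₁ K² ∫ φ dμ`. -/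
theorem lipschitz_heat_energy_bound (α : ℝ) (hα : 0 < α) :
    ∃ C₁ : ℝ, 0 < C₁ ∧
      ∀ (X : Type) [MetricSpace X] [MeasurableSpace X] [BorelSpace X] (μ : Measure X),
        (∀ (x : X) (r : ℝ), 0 < r →
          μ (Metric.ball x r)
            = ENNReal.ofReal (π ^ (α / 2) / Real.Gamma (α / 2 + 1) * r ^ α)) →
        ∀ (f : X → ℝ) (K : ℝ≥0), LipschitzWith K f →
        ∀ φ : X → ℝ, Continuous φ → HasCompactSupport φ → (∀ x, 0 ≤ φ x) →
        ∀ t : ℝ, 0 < t →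
          (∫⁻ x, ∫⁻ y, ENNReal.ofReal (φ x * (f x - f y) ^ 2 *
              ((4 * π * t) ^ (-(α / 2)) * Real.exp (-(dist x y) ^ 2 / (4 * t)))) ∂μ ∂μ)
            ≤ ENNReal.ofReal (2 * t * (C₁ * (K : ℝ) ^ 2 * ∫ x, φ x ∂μ)) := by
  have hΓ : 0 < Real.Gamma (α / 2 + 1) := Real.Gamma_pos_of_pos (by positivity)
  have hS : 0 < ∑' n : ℕ, ((n : ℝ) + 1) ^ (α + 2) * Real.exp (-(n : ℝ) ^ 2) :=
    (gaussian_shell_summable α).tsum_pos (fun n => by positivity) 0 (by positivity)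
  set S : ℝ := ∑' n : ℕ, ((n : ℝ) + 1) ^ (α + 2) * Real.exp (-(n : ℝ) ^ 2) with hSdef
  refine ⟨2 * S / Real.Gamma (α / 2 + 1), by positivity, ?_⟩
  intro X _ _ _ μ hμ f K hf φ hφ hφc hφ0 t ht
  have : IsLocallyFiniteMeasure μ := ⟨fun x => ⟨Metric.ball x 1,
    Metric.ball_mem_nhds x one_pos, by rw [hμ x 1 one_pos]; exact ENNReal.ofReal_lt_top⟩⟩
  have hint : Integrable φ μ := hφ.integrable_of_hasCompactSupport hφc
  set B : ℝ := (K : ℝ) ^ 2 * (4 * t / Real.Gamma (α / 2 + 1) * S) with hB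
  have hB0 : 0 ≤ B := by positivity
  have inner : ∀ x, (∫⁻ y, ENNReal.ofReal (φ x * (f x - f y) ^ 2 *
      ((4 * π * t) ^ (-(α / 2)) * Real.exp (-(dist x y) ^ 2 / (4 * t)))) ∂μ)
        ≤ ENNReal.ofReal B * ENNReal.ofReal (φ x) := by
    intro x
    have hx := hφ0 x
    calc _ ≤ ∫⁻ y, ENNReal.ofReal (φ x * (K : ℝ) ^ 2) * ENNReal.ofReal (dist x y ^ 2 *
          ((4 * π * t) ^ (-(α / 2)) * Real.exp (-(dist x y) ^ 2 / (4 * t)))) ∂μ := by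
          refine lintegral_mono fun y => ?_
          rw [← ENNReal.ofReal_mul (by positivity)]
          apply ENNReal.ofReal_le_ofReal
          have h1 : (f x - f y) ^ 2 ≤ (K : ℝ) ^ 2 * dist x y ^ 2 := by
            rw [← mul_pow, ← sq_abs, ← Real.dist_eq]
            exact pow_le_pow_left₀ dist_nonneg (hf.dist_le_mul x y) 2
          rw [← mul_assoc (φ x * (K : ℝ) ^ 2), mul_assoc (φ x) ((K : ℝ) ^ 2)]
          gcongr
      _ ≤ ENNReal.ofReal (φ x * (K : ℝ) ^ 2) *
            ENNReal.ofReal (4 * t / Real.Gamma (α / 2 + 1) * S) := by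
          rw [lintegral_const_mul' _ _ ENNReal.ofReal_ne_top]
          gcongr
          exact gaussian_second_moment_le hα hμ x ht
      _ = _ := by
          rw [← ENNReal.ofReal_mul (by positivity), ← ENNReal.ofReal_mul hB0]
          congr 1; rw [hB]; ring
  calc _ ≤ ∫⁻ x, ENNReal.ofReal B * ENNReal.ofReal (φ x) ∂μ := lintegral_mono inner
    _ = ENNReal.ofReal (B * ∫ x, φ x ∂μ) := by
        rw [lintegral_const_mul' _ _ ENNReal.ofReal_ne_top,
          ← ofReal_integral_eq_lintegral_ofReal hint (Eventually.of_forall hφ0),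
          ← ENNReal.ofReal_mul hB0]
    _ = _ := by congr 1; rw [hB]; ring
end
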